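/- For binary images P and G on the same h×w grid and any real ε with 0 < ε < 1/4, if C is a regular connected component of FP, then the closure of C is homeomorphic either to the closed unit disk {x ∈ ℝ² : ‖x‖₂ ≤ 1} or to the closed annulus {x ∈ ℝ² : 1 ≤ ‖x‖₂ ≤ 2}. -/

import Mathlib

open Set Metric

noncomputable section

/-- The plane modeled as `Fin 2 → ℝ` with the Pi (sup) norm. -/
abbrev Plane : Type := Fin 2 → ℝ

/-- The Euclidean plane (for Euclidean-norm disks and annuli). -/
abbrev EPlane : Type := EuclideanSpace ℝ (Fin 2)

/-- The closed unit pixel `[i-1,i] × [j-1,j]` for a pixel index `(i,j)`. -/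
def pixel (p : ℕ × ℕ) : Set Plane :=
  {x | x 0 ∈ Set.Icc ((p.1 : ℝ) - 1) (p.1 : ℝ) ∧ x 1 ∈ Set.Icc ((p.2 : ℝ) - 1) (p.2 : ℝ)}

/-- A binary image `S` lies on the `h × w` grid `{1,…,h} × {1,…,w}`. -/
def OnGrid (S : Set (ℕ × ℕ)) (h w : ℕ) : Prop :=
  S ⊆ Set.Icc 1 h ×ˢ Set.Icc 1 w

/-- The foreground `F(S)` of a binary image. -/
def fg (S : Set (ℕ × ℕ)) : Set Plane := ⋃ p ∈ S, pixel p

/-- Closed `ε`-thickening `D_ε(X)` with respect to the sup norm. -/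
def thick (ε : ℝ) (X : Set Plane) : Set Plane := {y | ∃ x ∈ X, ‖x - y‖ ≤ ε}

/-- `C` is a connected component of `A` (as a subset of the plane). -/
def IsCompOf (C A : Set Plane) : Prop := ∃ x ∈ A, C = connectedComponentIn A x

/-- Two subsets share a boundary edge if their closures intersect in an infinite set. -/
def SharesEdge (C D : Set Plane) : Prop := (closure C ∩ closure D).Infinite

/-- `X` strongly deformation retracts onto `A`. -/
def SDR (X A : Set Plane) : Prop :=
  ∃ H : C(↥X × unitInterval, ↥X),
    (∀ x, H (x, 0) = x) ∧ (∀ x, ((H (x, 1) : Plane)) ∈ A) ∧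
    (∀ a : ↥X, (a : Plane) ∈ A → ∀ t, H (a, t) = a)

def TPset (P G : Set (ℕ × ℕ)) (ε : ℝ) : Set Plane := thick ε (fg P) ∩ thick (2 * ε) (fg G)
def TNset (P G : Set (ℕ × ℕ)) (ε : ℝ) : Set Plane := (thick ε (fg P))ᶜ ∩ (thick (2 * ε) (fg G))ᶜ
def FPset (P G : Set (ℕ × ℕ)) (ε : ℝ) : Set Plane := thick ε (fg P) ∩ (thick (2 * ε) (fg G))ᶜ
def FNset (P G : Set (ℕ × ℕ)) (ε : ℝ) : Set Plane := (thick ε (fg P))ᶜ ∩ thick (2 * ε) (fg G)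

/-- A component `C` (of `FP` or `FN`) is regular: exactly one component of `TP` and exactly
one component of `TN` share a boundary edge with it. -/
def RegularComp (P G : Set (ℕ × ℕ)) (ε : ℝ) (C : Set Plane) : Prop :=
  (∃! T : Set Plane, IsCompOf T (TPset P G ε) ∧ SharesEdge T C) ∧
  (∃! T : Set Plane, IsCompOf T (TNset P G ε) ∧ SharesEdge T C)

/-- The zero-loss hypothesis: every component of `FP` and every component of `FN` is regular. -/
def ZeroLoss (P G : Set (ℕ × ℕ)) (ε : ℝ) : Prop :=
  (∀ C : Set Plane, IsCompOf C (FPset P G ε) → RegularComp P G ε C) ∧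
  (∀ C : Set Plane, IsCompOf C (FNset P G ε) → RegularComp P G ε C)

/-!
Refine the pixel grid by the lines at distance `ε` and `2ε` from the integer lines. Since `ε < 1/4`
these lines are distinct, both thickened foregrounds are unions of closed cells, and the closure of
a component `C` of `FP` is the union of an edge-connected, well-composed finite set `S` of cells.
Every component of the complement of `S` borders `S` along a cell of `TP` or of `TN`, because the
boundaries of the two foregrounds run on different lines. Only one component of each of `TP` and
`TN` touches `C`, so the complement of `S` has at most two components: `S` is simply connected or
has a single hole.

A simply connected well-composed set of cells can be dismantled: cut into maximal vertical runs, it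
is a tree, and a run that is a leaf of this tree can be pushed into its neighbour by a homeomorphism
of the plane supported near the run. What remains at the end is a single run, a rectangle. If `S`
has the hole `H`, first dismantle `H`, which shrinks the hole to a small rectangle inside one run
of the disk `H ∪ S`, and then dismantle `H ∪ S` towards that run without moving the rectangle. This
leaves a rectangle with a rectangular hole.
-/

section AmbientEquiv

variable {α β : Type*} [TopologicalSpace α] [TopologicalSpace β] {N N' X Y Z : Set α}

/-- `X` and `Y` correspond under a self-homeomorphism of the ambient space supported in `N`. -/
def AmbientEquiv (N X Y : Set α) : Prop :=
  ∃ Φ : α ≃ₜ α, (∀ z ∉ N, Φ z = z) ∧ ∀ z, Φ z ∈ Y ↔ z ∈ X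

namespace AmbientEquiv

lemma refl (N X : Set α) : AmbientEquiv N X X :=
  ⟨Homeomorph.refl α, fun _ _ => rfl, fun _ => Iff.rfl⟩

lemma mono (h : AmbientEquiv N X Y) (hN : N ⊆ N') : AmbientEquiv N' X Y := by
  obtain ⟨Φ, hfix, hΦ⟩ := h
  exact ⟨Φ, fun z hz => hfix z fun hzN => hz (hN hzN), hΦ⟩

lemma trans (h₁ : AmbientEquiv N X Y) (h₂ : AmbientEquiv N Y Z) : AmbientEquiv N X Z := by
  obtain ⟨Φ, hΦfix, hΦ⟩ := h₁
  obtain ⟨Ψ, hΨfix, hΨ⟩ := h₂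
  refine ⟨Φ.trans Ψ, fun z hz => ?_, fun z => (hΨ _).trans (hΦ z)⟩
  rw [Homeomorph.trans_apply, hΦfix z hz, hΨfix z hz]

lemma preimage (h : AmbientEquiv N X Y) (e : β ≃ₜ α) :
    AmbientEquiv (e ⁻¹' N) (e ⁻¹' X) (e ⁻¹' Y) := by
  obtain ⟨Φ, hfix, hΦ⟩ := h
  refine ⟨(e.trans Φ).trans e.symm, fun z hz => ?_, fun z => ?_⟩
  · simp only [Homeomorph.trans_apply, hfix (e z) hz, Homeomorph.symm_apply_apply]
  · simp only [Homeomorph.trans_apply, mem_preimage, Homeomorph.apply_symm_apply, hΦ]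

lemma interior (h : AmbientEquiv N X Y) : AmbientEquiv N (interior X) (interior Y) := by
  obtain ⟨Φ, hfix, hΦ⟩ := h
  have hX : Φ ⁻¹' Y = X := ext hΦ
  exact ⟨Φ, hfix, fun z => by rw [← hX, ← Φ.preimage_interior, mem_preimage]⟩

lemma sdiff_of_disjoint (h : AmbientEquiv N X Y) (hZ : Disjoint N Z) :
    AmbientEquiv N (X \ Z) (Y \ Z) := by
  obtain ⟨Φ, hfix, hΦ⟩ := h
  refine ⟨Φ, hfix, fun z => and_congr (hΦ z) (not_congr ⟨fun hz => ?_, fun hz => ?_⟩)⟩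
  · rwa [Φ.injective (hfix (Φ z) (hZ.notMem_of_mem_right hz)).symm]
  · rwa [hfix z (hZ.notMem_of_mem_right hz)]

lemma sdiff_of_subset (h : AmbientEquiv N X Y) (hZ : N ⊆ Z) :
    AmbientEquiv N (Z \ X) (Z \ Y) := by
  obtain ⟨Φ, hfix, hΦ⟩ := h
  refine ⟨Φ, hfix, fun z => and_congr ?_ (not_congr (hΦ z))⟩
  by_cases hz : z ∈ N
  · refine iff_of_true (hZ ?_) (hZ hz)
    by_contra hz'
    exact hz' (by rwa [Φ.injective (hfix (Φ z) hz')])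
  · rw [hfix z hz]

lemma nonempty_homeomorph (h : AmbientEquiv N X Y) : Nonempty (X ≃ₜ Y) := by
  obtain ⟨Φ, -, hΦ⟩ := h
  exact ⟨Φ.subtype fun z => (hΦ z).symm⟩

end AmbientEquiv

end AmbientEquiv

section Kink

/-- The piecewise linear map of the line which fixes `(-∞, c]` and has slope `β` on `[c, ∞)`. -/
def kink (c β x : ℝ) : ℝ := x + (β - 1) * max (x - c) 0

variable {c β x y : ℝ}

lemma kink_of_le (hx : x ≤ c) : kink c β x = x := by
  rw [kink, max_eq_right (by linarith), mul_zero, add_zero]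

lemma kink_of_ge (hx : c ≤ x) : kink c β x = c + β * (x - c) := by
  rw [kink, max_eq_left (by linarith)]; ring

lemma kink_inv_kink (hβ : 0 < β) : kink c β⁻¹ (kink c β x) = x := by
  rcases le_total x c with hx | hx
  · rw [kink_of_le hx, kink_of_le hx]
  · rw [kink_of_ge hx, kink_of_ge (by nlinarith)]
    field_simp
    ring

lemma kink_strictMono (hβ : 0 < β) : StrictMono (kink c β) := by
  intro x y hxy
  rcases le_or_gt y c with hy | hy
  · rwa [kink_of_le hy, kink_of_le (hxy.le.trans hy)]
  · rw [kink_of_ge hy.le]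
    rcases le_total x c with hx | hx
    · rw [kink_of_le hx]; nlinarith [mul_pos hβ (sub_pos.2 hy)]
    · rw [kink_of_ge hx]; nlinarith

/-- The homeomorphism of the plane applying `kink (c y) (β y)` on the horizontal line at
height `y`. -/
def kinkHomeo {c β : ℝ → ℝ} (hc : Continuous c) (hβ : Continuous β) (hpos : ∀ y, 0 < β y) :
    ℝ × ℝ ≃ₜ ℝ × ℝ where
  toFun z := (kink (c z.2) (β z.2) z.1, z.2)
  invFun z := (kink (c z.2) (β z.2)⁻¹ z.1, z.2)
  left_inv z := Prod.ext (kink_inv_kink (hpos _)) rfl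
  right_inv z := Prod.ext (by simpa only [inv_inv] using kink_inv_kink (inv_pos.2 (hpos z.2))) rfl
  continuous_toFun := by unfold kink; fun_prop
  continuous_invFun := by
    have hβ' : Continuous fun y => (β y)⁻¹ := hβ.inv₀ fun y => (hpos y).ne'
    exact .prodMk (continuous_fst.add (((hβ'.comp continuous_snd).sub continuous_const).mul
      ((continuous_fst.sub (hc.comp continuous_snd)).max continuous_const))) continuous_snd

/-- The piecewise linear map of the line which is the identity outside `[p, r]` and affine on
`[p, q]` and `[q, r]`, with `q ↦ q'`. -/
def pushMap (p q q' r x : ℝ) : ℝ :=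
  kink r ((r - q') / (r - q))⁻¹ (kink q' ((r - q') / (r - q) / ((q' - p) / (q - p)))
    (kink p ((q' - p) / (q - p)) x))

section PushMap

variable {p q q' r : ℝ} (hpq : p < q) (hqr : q < r) (hpq' : p < q') (hqr' : q' < r)
include hpq hqr hpq' hqr'

lemma pushMap_eq_self (hx : x ≤ p ∨ r ≤ x ∨ q = q') : pushMap p q q' r x = x := by
  have hpq₀ : 0 < q - p := sub_pos.2 hpq
  have hqr₀ : 0 < r - q := sub_pos.2 hqr
  have hpq₀' : 0 < q' - p := sub_pos.2 hpq'
  have hqr₀' : 0 < r - q' := sub_pos.2 hqr'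
  rw [pushMap]
  rcases hx with hx | hx | rfl
  · rw [kink_of_le hx, kink_of_le (c := q') (by linarith), kink_of_le (by linarith)]
  · have h₁ : kink p ((q' - p) / (q - p)) x = q' + (q' - p) / (q - p) * (x - q) := by
      rw [kink_of_ge (by linarith)]; field_simp; ring
    have h₂ : kink q' ((r - q') / (r - q) / ((q' - p) / (q - p)))
        (q' + (q' - p) / (q - p) * (x - q)) = r + (r - q') / (r - q) * (x - r) := by
      rw [kink_of_ge (le_add_of_nonneg_right (mul_nonneg (by positivity) (by linarith)))]
      field_simp; ring
    rw [h₁, h₂, kink_of_ge (le_add_of_nonneg_right (mul_nonneg (by positivity) (by linarith)))]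
    field_simp; ring
  · simp only [kink, div_self hpq₀.ne', div_self hqr₀.ne', div_one, inv_one, sub_self, zero_mul,
      add_zero]

lemma pushMap_le_iff : pushMap p q q' r x ≤ q' ↔ x ≤ q := by
  have hα : 0 < (q' - p) / (q - p) := div_pos (sub_pos.2 hpq') (sub_pos.2 hpq)
  have hγ : 0 < (r - q') / (r - q) := div_pos (sub_pos.2 hqr') (sub_pos.2 hqr)
  have hq : pushMap p q q' r q = q' := by
    have hkink : kink p ((q' - p) / (q - p)) q = q' := by
      rw [kink_of_ge hpq.le, div_mul_cancel₀ _ (sub_pos.2 hpq).ne', add_sub_cancel]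
    rw [pushMap, hkink, kink_of_le le_rfl, kink_of_le hqr'.le]
  have hmono : StrictMono (pushMap p q q' r) :=
    (kink_strictMono (inv_pos.2 hγ)).comp
      ((kink_strictMono (div_pos hγ hα)).comp (kink_strictMono hα))
  rw [← hmono.le_iff_le (a := x) (b := q), hq]

end PushMap

lemma exists_shear {p q q' r : ℝ → ℝ} (hp : Continuous p) (hq : Continuous q)
    (hq' : Continuous q') (hr : Continuous r) (hpq : ∀ y, p y < q y) (hqr : ∀ y, q y < r y)
    (hpq' : ∀ y, p y < q' y) (hqr' : ∀ y, q' y < r y) :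
    ∃ H : ℝ × ℝ ≃ₜ ℝ × ℝ, (∀ z, (H z).2 = z.2) ∧
      (∀ z, z.1 ≤ p z.2 ∨ r z.2 ≤ z.1 ∨ q z.2 = q' z.2 → H z = z) ∧
      ∀ z, (H z).1 ≤ q' z.2 ↔ z.1 ≤ q z.2 := by
  have hα y : 0 < (q' y - p y) / (q y - p y) := div_pos (sub_pos.2 (hpq' y)) (sub_pos.2 (hpq y))
  have hγ y : 0 < (r y - q' y) / (r y - q y) := div_pos (sub_pos.2 (hqr' y)) (sub_pos.2 (hqr y))
  have hαc : Continuous fun y => (q' y - p y) / (q y - p y) :=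
    (hq'.sub hp).div (hq.sub hp) fun y => (sub_pos.2 (hpq y)).ne'
  have hγc : Continuous fun y => (r y - q' y) / (r y - q y) :=
    (hr.sub hq').div (hr.sub hq) fun y => (sub_pos.2 (hqr y)).ne'
  refine ⟨((kinkHomeo hp hαc hα).trans (kinkHomeo hq' (hγc.div hαc fun y => (hα y).ne')
    fun y => div_pos (hγ y) (hα y))).trans (kinkHomeo hr (hγc.inv₀ fun y => (hγ y).ne')
    fun y => inv_pos.2 (hγ y)), fun z => rfl, fun z hz => Prod.ext (pushMap_eq_self
      (hpq _) (hqr _) (hpq' _) (hqr' _) hz) rfl, fun z => pushMap_le_iff (hpq _) (hqr _)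
      (hpq' _) (hqr' _)⟩

end Kink

section Absorb

/-- The coordinates `(t, σ)` of a point seen from the apex `(x₀, m)`: `t` is the horizontal distance
to the apex and, where `p ≤ t`, `σ` is the slope of the ray from the apex to the point. -/
def fanHomeo (x₀ m : ℝ) {p : ℝ} (hp : 0 < p) : ℝ × ℝ ≃ₜ ℝ × ℝ where
  toFun z := (z.1 - x₀, (z.2 - m) / max (z.1 - x₀) p)
  invFun w := (x₀ + w.1, m + w.2 * max w.1 p)
  left_inv z := by
    have : max (z.1 - x₀) p ≠ 0 := (lt_max_of_lt_right hp).ne'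
    ext <;> simp [this]
  right_inv w := by
    have : max w.1 p ≠ 0 := (lt_max_of_lt_right hp).ne'
    ext <;> simp [this]
  continuous_toFun := by
    have hne : ∀ z : ℝ × ℝ, max (z.1 - x₀) p ≠ 0 := fun z => (lt_max_of_lt_right hp).ne'
    fun_prop (disch := exact hne)
  continuous_invFun := by fun_prop

lemma fanHomeo_symm_apply {x₀ m p : ℝ} (hp : 0 < p) {w : ℝ × ℝ} (hw : p ≤ w.1) :
    (fanHomeo x₀ m hp).symm w = (x₀ + w.1, m + w.2 * w.1) :=
  Prod.ext rfl (congrArg (m + w.2 * ·) (max_eq_left hw))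

/-- The horizontal distance at which the ray of slope `σ` from the origin leaves
`(-∞, B] × [-h, h]`. -/
def exitDist (B h σ : ℝ) : ℝ := B / max 1 (|σ| * B / h)

variable {B h σ t : ℝ}

lemma exitDist_continuous (B h : ℝ) : Continuous (exitDist B h) := by
  have hne : ∀ σ : ℝ, max 1 (|σ| * B / h) ≠ 0 := fun σ => (lt_max_of_lt_left one_pos).ne'
  unfold exitDist
  fun_prop (disch := exact hne)

lemma le_exitDist_iff (hB : 0 < B) (hh : 0 < h) (ht : 0 ≤ t) :
    t ≤ exitDist B h σ ↔ t ≤ B ∧ |σ * t| ≤ h := by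
  have hslope : t * (|σ| * B / h) ≤ B ↔ |σ| * t ≤ h := by
    rw [show t * (|σ| * B / h) = B * (|σ| * t / h) by ring, mul_le_iff_le_one_right hB,
      div_le_one hh]
  rw [abs_mul, abs_of_nonneg ht, exitDist, le_div_iff₀ (lt_max_of_lt_left one_pos),
    mul_max_of_nonneg _ _ ht, max_le_iff, mul_one, hslope]

lemma le_of_lt_mul_exitDist {ρ : ℝ} (hB : 0 < B) (hh : 0 < h) (ht : 0 ≤ t) (hρ : 0 < ρ)
    (htρ : t < (1 + ρ) * exitDist B h σ) : t ≤ B + ρ * B ∧ |σ * t| ≤ h + ρ * h := by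
  have hdiv : t / (1 + ρ) ≤ exitDist B h σ := by rw [div_le_iff₀ (by positivity)]; linarith
  obtain ⟨htB, hth⟩ := (le_exitDist_iff hB hh (by positivity)).1 hdiv
  rw [← mul_div_assoc, abs_div, abs_of_pos (add_pos one_pos hρ), div_le_iff₀ (by positivity)] at hth
  rw [div_le_iff₀ (by positivity)] at htB
  constructor <;> linarith

/-- In the coordinates of `fanHomeo`: the part of each ray in the rectangle `[δ, B] × [-h, h]` is
shrunk to its first point. -/
lemma exists_ray_push {B h δ : ℝ} (hδ : 0 < δ) (hδB : δ < B) (hh : 0 < h) :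
    ∃ H : ℝ × ℝ ≃ₜ ℝ × ℝ,
      (∀ w, H w ≠ w → δ / 2 < w.1 ∧ δ < exitDist B h w.2 ∧ w.1 ≤ B + δ ∧ |w.2 * w.1| ≤ h + δ) ∧
      ∀ w, (H w).1 ≤ δ ↔ w.1 ≤ max δ (exitDist B h w.2) := by
  have hB : 0 < B := hδ.trans hδB
  obtain ⟨ρ, hρ, hρB, hρh⟩ : ∃ ρ, 0 < ρ ∧ ρ * B ≤ δ ∧ ρ * h ≤ δ := by
    refine ⟨δ / (B + h), by positivity, ?_, ?_⟩ <;>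
      rw [div_mul_eq_mul_div, div_le_iff₀ (by positivity)] <;> nlinarith
  set q : ℝ → ℝ := fun σ => max δ (exitDist B h σ)
  have hqc : Continuous q := continuous_const.max (exitDist_continuous B h)
  have hδq σ : δ ≤ q σ := le_max_left _ _
  obtain ⟨H, -, hHfix, hHle⟩ := exists_shear (p := fun _ => δ / 2) (q := q) (q' := fun _ => δ)
    (r := fun σ => (1 + ρ) * q σ) continuous_const hqc continuous_const
    (continuous_const.mul hqc) (fun σ => by linarith [hδq σ]) (fun σ => by nlinarith [hδq σ])
    (fun _ => by linarith) (fun σ => by nlinarith [hδq σ])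
  refine ⟨H, fun w hw => ?_, hHle⟩
  obtain ⟨hp, hr, hq⟩ : ¬w.1 ≤ δ / 2 ∧ ¬(1 + ρ) * q w.2 ≤ w.1 ∧ ¬q w.2 = δ := by
    simpa only [not_or] using mt (hHfix w) hw
  have hexit : δ < exitDist B h w.2 := by
    by_contra hle
    exact hq (max_eq_left (not_lt.1 hle))
  rw [show q w.2 = exitDist B h w.2 from max_eq_right hexit.le, not_le] at hr
  obtain ⟨hwB, hwh⟩ := le_of_lt_mul_exitDist hB hh (by linarith) hρ hr
  exact ⟨not_le.1 hp, hexit, by linarith, by linarith⟩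

variable {a b c d δ : ℝ} {W : Set (ℝ × ℝ)}

lemma fanHomeo_symm_mem_rect_iff (hab : a < b) (hcd : c < d) (hδ : 0 < δ) {w : ℝ × ℝ} :
    (fanHomeo (a - δ) ((c + d) / 2) (half_pos hδ)).symm w ∈ Icc a b ×ˢ Icc c d ↔
      δ ≤ w.1 ∧ w.1 ≤ exitDist (b - a + δ) ((d - c) / 2) w.2 := by
  rcases lt_or_ge w.1 δ with hw | hw
  · refine iff_of_false (fun hz => ?_) fun hz => hw.not_ge hz.1
    have : a ≤ a - δ + w.1 := hz.1.1
    linarith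
  · rw [fanHomeo_symm_apply _ (by linarith), le_exitDist_iff (by linarith) (by linarith)
      (by linarith), abs_le, mem_prod, mem_Icc, mem_Icc]
    grind

lemma fanHomeo_symm_mem_thickening (hδ : 0 < δ) {w : ℝ × ℝ} (hw : δ / 2 < w.1)
    (hwb : w.1 ≤ b - a + δ + δ) (hwd : |w.2 * w.1| ≤ (d - c) / 2 + δ) :
    (fanHomeo (a - δ) ((c + d) / 2) (half_pos hδ)).symm w ∈
      Icc (a - δ) (b + δ) ×ˢ Icc (c - δ) (d + δ) := by
  rw [abs_le] at hwd
  rw [fanHomeo_symm_apply _ hw.le, mem_prod, mem_Icc, mem_Icc]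
  grind

lemma fanHomeo_symm_snd_mem_of_lt_exitDist (hab : a < b) (hcd : c < d) (hδ : 0 < δ) {w : ℝ × ℝ}
    (hw : δ / 2 < w.1) (hwδ : w.1 ≤ δ) (hexit : δ < exitDist (b - a + δ) ((d - c) / 2) w.2) :
    ((fanHomeo (a - δ) ((c + d) / 2) (half_pos hδ)).symm w).2 ∈ Icc c d := by
  have hδh := ((le_exitDist_iff (by linarith) (by linarith) hδ.le).1 hexit.le).2
  have hw₀ : 0 < w.1 := by linarith
  have hwh : |w.2 * w.1| ≤ (d - c) / 2 := by
    refine le_trans ?_ hδh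
    rw [abs_mul, abs_mul, abs_of_pos hw₀, abs_of_pos hδ]
    gcongr
  rw [abs_le] at hwh
  rw [fanHomeo_symm_apply _ hw.le, mem_Icc]
  grind

/-- A rectangle attached to `W` along its left side can be absorbed into `W`: push along the rays
from an apex slightly to the left of that side. -/
lemma ambientEquiv_union_left (hab : a < b) (hcd : c < d) (hδ : 0 < δ)
    (hright : ∀ z ∈ Icc (a - δ) (b + δ) ×ˢ Icc (c - δ) (d + δ), a < z.1 → z ∉ W)
    (hleft : ∀ z ∈ Icc (a - δ) (b + δ) ×ˢ Icc (c - δ) (d + δ), z.1 ≤ a → z.2 ∈ Icc c d → z ∈ W) :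
    AmbientEquiv (Icc (a - δ) (b + δ) ×ˢ Icc (c - δ) (d + δ)) (Icc a b ×ˢ Icc c d ∪ W) W := by
  set N := Icc (a - δ) (b + δ) ×ˢ Icc (c - δ) (d + δ)
  obtain ⟨H, hHmove, hHle⟩ := exists_ray_push hδ (show δ < b - a + δ by linarith)
    (show 0 < (d - c) / 2 by linarith)
  set E := fanHomeo (a - δ) ((c + d) / 2) (half_pos hδ)
  have hfst w : (E.symm w).1 = a - δ + w.1 := rfl
  have hmoved w (hw : H w ≠ w) : E.symm w ∈ N ∧ (E.symm w ∈ W ↔ w.1 ≤ δ) := by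
    obtain ⟨hp, hexit, hwB, hwh⟩ := hHmove w hw
    have hwN : E.symm w ∈ N := fanHomeo_symm_mem_thickening hδ hp hwB hwh
    refine ⟨hwN, fun hW => not_lt.1 fun hδw => hright _ hwN ?_ hW, fun hwδ => hleft _ hwN ?_ ?_⟩
    · rw [hfst]; linarith
    · rw [hfst]; linarith
    · exact fanHomeo_symm_snd_mem_of_lt_exitDist hab hcd hδ hp hwδ hexit
  refine ⟨(E.trans H).trans E.symm, E.symm.surjective.forall.2 fun w hz => ?_,
    E.symm.surjective.forall.2 fun w => ?_⟩ <;>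
    simp only [Homeomorph.trans_apply, Homeomorph.apply_symm_apply]
  · by_contra hw
    exact hz (hmoved w fun h => hw (by rw [h])).1
  · rw [mem_union, fanHomeo_symm_mem_rect_iff hab hcd hδ]
    by_cases hw : H w = w
    · rw [hw, or_iff_right_of_imp]
      rintro ⟨hδw, hexit⟩
      have hwδ : w.1 ≤ δ := by simpa only [hw] using (hHle w).2 (hexit.trans (le_max_right _ _))
      have hz := (fanHomeo_symm_mem_rect_iff hab hcd hδ).2 ⟨hδw, hexit⟩
      have hzN : E.symm w ∈ N :=
        prod_mono (Icc_subset_Icc (by linarith) (by linarith))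
          (Icc_subset_Icc (by linarith) (by linarith)) hz
      exact hleft _ hzN (by rw [hfst]; linarith) hz.2
    · rw [(hmoved _ fun h => hw (H.injective h)).2, hHle, (hmoved w hw).2, le_max_iff]
      grind

lemma ambientEquiv_union_right (hab : a < b) (hcd : c < d) (hδ : 0 < δ)
    (hleft : ∀ z ∈ Icc (a - δ) (b + δ) ×ˢ Icc (c - δ) (d + δ), z.1 < b → z ∉ W)
    (hright : ∀ z ∈ Icc (a - δ) (b + δ) ×ˢ Icc (c - δ) (d + δ), b ≤ z.1 → z.2 ∈ Icc c d → z ∈ W) :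
    AmbientEquiv (Icc (a - δ) (b + δ) ×ˢ Icc (c - δ) (d + δ)) (Icc a b ×ˢ Icc c d ∪ W) W := by
  set e : ℝ × ℝ ≃ₜ ℝ × ℝ := (Homeomorph.neg ℝ).prodCongr (Homeomorph.refl ℝ)
  have he (z : ℝ × ℝ) : e z = (-z.1, z.2) := rfl
  have hrect (a b c d : ℝ) : e ⁻¹' (Icc a b ×ˢ Icc c d) = Icc (-b) (-a) ×ˢ Icc c d := by
    ext z
    simp only [mem_preimage, he, mem_prod, mem_Icc]
    grind
  have hN : Icc (-b - δ) (-a + δ) ×ˢ Icc (c - δ) (d + δ) =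
      e ⁻¹' (Icc (a - δ) (b + δ) ×ˢ Icc (c - δ) (d + δ)) := by
    rw [hrect, neg_add', neg_sub, sub_eq_neg_add δ a]
  have hsymm := (ambientEquiv_union_left (W := e ⁻¹' W) (neg_lt_neg hab) hcd hδ
    (fun z hz hbz => hleft (e z) (hN.subset hz) (neg_lt.1 hbz))
    (fun z hz hzb => hright (e z) (hN.subset hz) (le_neg.1 hzb))).preimage e
  have hee (X : Set (ℝ × ℝ)) : e ⁻¹' (e ⁻¹' X) = X := by
    ext z; simp only [mem_preimage, he, neg_neg]
  rwa [hN, ← hrect, ← preimage_union, hee, hee, hee] at hsymm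

lemma ambientEquiv_union_below (hab : a < b) (hcd : c < d) (hδ : 0 < δ)
    (habove : ∀ z ∈ Icc (a - δ) (b + δ) ×ˢ Icc (c - δ) (d + δ), c < z.2 → z ∉ W)
    (hbelow : ∀ z ∈ Icc (a - δ) (b + δ) ×ˢ Icc (c - δ) (d + δ), z.2 ≤ c → z.1 ∈ Icc a b → z ∈ W) :
    AmbientEquiv (Icc (a - δ) (b + δ) ×ˢ Icc (c - δ) (d + δ)) (Icc a b ×ˢ Icc c d ∪ W) W := by
  have hswap := (ambientEquiv_union_left (W := Prod.swap ⁻¹' W) hcd hab hδ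
    (fun z hz hcz => habove z.swap hz.symm hcz)
    (fun z hz hzc => hbelow z.swap hz.symm hzc)).preimage (Homeomorph.prodComm ℝ ℝ)
  simpa only [Homeomorph.coe_prodComm, preimage_union, preimage_swap_prod, ← preimage_comp,
    Prod.swap_swap_eq, preimage_id] using hswap

lemma ambientEquiv_union_above (hab : a < b) (hcd : c < d) (hδ : 0 < δ)
    (hbelow : ∀ z ∈ Icc (a - δ) (b + δ) ×ˢ Icc (c - δ) (d + δ), z.2 < d → z ∉ W)
    (habove : ∀ z ∈ Icc (a - δ) (b + δ) ×ˢ Icc (c - δ) (d + δ), d ≤ z.2 → z.1 ∈ Icc a b → z ∈ W) :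
    AmbientEquiv (Icc (a - δ) (b + δ) ×ˢ Icc (c - δ) (d + δ)) (Icc a b ×ˢ Icc c d ∪ W) W := by
  have hswap := (ambientEquiv_union_right (W := Prod.swap ⁻¹' W) hcd hab hδ
    (fun z hz hzd => hbelow z.swap hz.symm hzd)
    (fun z hz hdz => habove z.swap hz.symm hdz)).preimage (Homeomorph.prodComm ℝ ℝ)
  simpa only [Homeomorph.coe_prodComm, preimage_union, preimage_swap_prod, ← preimage_comp,
    Prod.swap_swap_eq, preimage_id] using hswap

end Absorb

section Connectivity

variable {α : Type*} {r r' : α → α → Prop} {D D' : Set α} {u v w k : α}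

/-- `u` and `v` are joined by an `r`-path all of whose vertices lie in `D`. -/
def ConnIn (r : α → α → Prop) (D : Set α) (u v : α) : Prop :=
  u ∈ D ∧ Relation.ReflTransGen (fun a b => r a b ∧ b ∈ D) u v

/-- Any two elements of `D` are joined by an `r`-path in `D`. -/
def IsConn (r : α → α → Prop) (D : Set α) : Prop := ∀ u ∈ D, ∀ v ∈ D, ConnIn r D u v

/-- The `r`-connected component of `u` in `D`; it is empty if `u ∉ D`. -/
def compIn (r : α → α → Prop) (D : Set α) (u : α) : Set α := {v | ConnIn r D u v}

namespace ConnIn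

lemma refl (hu : u ∈ D) : ConnIn r D u u := ⟨hu, .refl⟩

lemma trans (h₁ : ConnIn r D u v) (h₂ : ConnIn r D v w) : ConnIn r D u w :=
  ⟨h₁.1, h₁.2.trans h₂.2⟩

lemma single (hu : u ∈ D) (hv : v ∈ D) (h : r u v) : ConnIn r D u v := ⟨hu, .single ⟨h, hv⟩⟩

lemma right_mem (h : ConnIn r D u v) : v ∈ D := by
  obtain ⟨hu, hp⟩ := h
  cases hp with
  | refl => exact hu
  | tail _ hs => exact hs.2

@[elab_as_elim]
lemma induction {p : α → Prop} (h : ConnIn r D u v) (hu : p u)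
    (hstep : ∀ a ∈ D, ∀ b ∈ D, r a b → p a → p b) : p v := by
  obtain ⟨huD, hp⟩ := h
  induction hp with
  | refl => exact hu
  | tail hp hs ih => exact hstep _ (right_mem ⟨huD, hp⟩) _ hs.2 hs.1 ih

lemma mem_of_closed (h : ConnIn r D u v) (hu : u ∈ D')
    (hstep : ∀ a ∈ D', a ∈ D → ∀ b ∈ D, r a b → b ∈ D') : ConnIn r D' u v :=
  h.induction (.refl hu) fun a ha b hb hab hua =>
    hua.trans (.single hua.right_mem (hstep a hua.right_mem ha b hb hab) hab)

lemma mono (h : ConnIn r D u v) (hD : D ⊆ D') : ConnIn r D' u v :=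
  h.mem_of_closed (hD h.1) fun _ _ _ _ hb _ => hD hb

lemma mono_rel (h : ConnIn r' D u v) (hr : ∀ a b, r' a b → r a b) : ConnIn r D u v :=
  h.induction (.refl h.1) fun a ha b hb hab hua => hua.trans (.single ha hb (hr a b hab))

lemma symm [Std.Symm r] (h : ConnIn r D u v) : ConnIn r D v u :=
  h.induction (.refl h.1) fun a ha b hb hab hau =>
    (single hb ha (Std.Symm.symm a b hab)).trans hau

end ConnIn

lemma compIn_subset : compIn r D u ⊆ D := fun _ hv => hv.right_mem

lemma mem_compIn_self (hu : u ∈ D) : u ∈ compIn r D u := .refl hu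

lemma mem_compIn_of_rel (hv : v ∈ compIn r D u) (hw : w ∈ D) (h : r v w) : w ∈ compIn r D u :=
  hv.trans (.single hv.right_mem hw h)

lemma mem_compIn_comm [Std.Symm r] : v ∈ compIn r D u ↔ u ∈ compIn r D v :=
  ⟨ConnIn.symm, ConnIn.symm⟩

lemma connIn_compIn (hv : v ∈ compIn r D u) : ConnIn r (compIn r D u) u v :=
  hv.mem_of_closed (mem_compIn_self hv.1) fun _ ha _ _ hb hab => mem_compIn_of_rel ha hb hab

lemma isConn_of_forall_connIn [Std.Symm r] (h : ∀ v ∈ D, ConnIn r D k v) : IsConn r D :=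
  fun u hu v hv => (h u hu).symm.trans (h v hv)

lemma isConn_compIn [Std.Symm r] : IsConn r (compIn r D u) :=
  isConn_of_forall_connIn fun _ hv => connIn_compIn hv

/-- The component of a base point in `D` minus an `r'`-component is largest for a non-cutting one:
otherwise the `r'`-component of a point left out could be removed instead. -/
lemma exists_isConn_sdiff_compIn [Std.Symm r] [Std.Symm r'] (hr : ∀ a b, r' a b → r a b)
    (hfin : D.Finite) (hD : IsConn r D) {k₀ : α} (hk₀ : k₀ ∈ D)
    (hne : (D \ compIn r' D k₀).Nonempty) :
    ∃ k ∈ D \ compIn r' D k₀, IsConn r (D \ compIn r' D k) := by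
  have hdisj {u v : α} (huv : v ∉ compIn r' D u) : compIn r' D v ⊆ D \ compIn r' D u :=
    fun w hw => ⟨hw.right_mem, fun hw' => huv (hw'.trans hw.symm)⟩
  have hjoin {u v : α} (huv : v ∉ compIn r' D u) {w : α} (hw : w ∈ compIn r' D v) :
      ConnIn r (D \ compIn r' D u) v w :=
    ((connIn_compIn hw).mono (hdisj huv)).mono_rel hr
  set reach : α → Set α := fun k => compIn r (D \ compIn r' D k) k₀
  obtain ⟨k, hk, hmax⟩ := exists_max_image (D \ compIn r' D k₀) (fun k => (reach k).ncard)
    (hfin.subset sdiff_subset) hne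
  refine ⟨k, hk, isConn_of_forall_connIn (k := k₀) ?_⟩
  by_contra! hcut
  obtain ⟨w, hw, hwk⟩ := hcut
  have hk₀k : k₀ ∉ compIn r' D k := mt mem_compIn_comm.1 hk.2
  have hw₀ : w ∈ D \ compIn r' D k₀ := ⟨hw.1, fun h => hwk (hjoin hk₀k h)⟩
  have hreach_w {v : α} (hv : v ∈ reach k) : v ∉ compIn r' D w :=
    fun h => hwk (hv.trans (hjoin hw.2 h).symm)
  have hsub : reach k ⊆ reach w := fun v hv =>
    (connIn_compIn hv).mono fun x hx => ⟨hx.right_mem.1, hreach_w hx⟩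
  obtain ⟨b, hb, c, hc, hbc⟩ : ∃ b ∈ reach k, ∃ c ∈ compIn r' D k, r b c := by
    by_contra! hno
    have hmem : ConnIn r (reach k) k₀ k :=
      (hD k₀ hk₀ k hk.1).mem_of_closed (mem_compIn_self ⟨hk₀, hk₀k⟩) fun a ha _ b hb hab =>
        mem_compIn_of_rel ha ⟨hb, fun h => hno a ha b h hab⟩ hab
    exact hmem.right_mem.right_mem.2 (mem_compIn_self hk.1)
  have hcw : c ∈ reach w := mem_compIn_of_rel (hsub hb)
    ⟨hc.right_mem, fun h => hw.2 (hc.trans h.symm)⟩ hbc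
  have hlt : (reach k).ncard < (reach w).ncard :=
    ncard_lt_ncard ⟨hsub, fun h => (h hcw).right_mem.2 hc⟩
      (hfin.subset fun v hv => hv.right_mem.1)
  exact hlt.not_ge (hmax w hw₀)

lemma exists_rel_of_notMem {S : Set α} (huniv : IsConn r univ) (hk : k ∈ S) (hv : v ∉ S) :
    ∃ a ∈ compIn r Sᶜ v, ∃ b ∈ S, r a b := by
  by_contra! hno
  have hvk := (huniv v trivial k trivial).mem_of_closed (mem_compIn_self hv) fun a ha _ b _ hab =>
    mem_compIn_of_rel ha (fun hbS => hno a ha b hbS hab) hab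
  exact hvk.right_mem.right_mem hk

/-- Every component of `Sᶜ` touches `S`, so that the complement of one of them is connected
through `S`. -/
lemma isConn_compl_compIn_compl [Std.Symm r] {S : Set α} (huniv : IsConn r univ) (hS : IsConn r S)
    (hne : S.Nonempty) (o : α) : IsConn r (compIn r Sᶜ o)ᶜ := by
  obtain ⟨k, hk⟩ := hne
  have hSo : S ⊆ (compIn r Sᶜ o)ᶜ := fun v hv hvo => hvo.right_mem hv
  refine isConn_of_forall_connIn (k := k) fun v hv => ?_
  by_cases hvS : v ∈ S
  · exact (hS k hk v hvS).mono hSo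
  obtain ⟨a, ha, b, hb, hab⟩ := exists_rel_of_notMem huniv hk hvS
  have hvo : compIn r Sᶜ v ⊆ (compIn r Sᶜ o)ᶜ := fun w hw hwo => hv (hwo.trans hw.symm)
  exact ((hS k hk b hb).mono hSo).trans
    ((ConnIn.single (hvo ha) (hSo hb) hab).symm.trans ((connIn_compIn ha).mono hvo).symm)

lemma connIn_of_forall_mem_uIcc [Std.Symm r] {g : ℤ → α} (hr : ∀ j, r (g j) (g (j + 1))) {a b : ℤ}
    (h : ∀ j ∈ uIcc a b, g j ∈ D) : ConnIn r D (g a) (g b) := by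
  wlog hab : a ≤ b generalizing a b
  · exact (this (by rwa [uIcc_comm]) (le_of_not_ge hab)).symm
  rw [uIcc_of_le hab] at h
  induction b, hab using Int.leInduction with
  | base => exact .refl (h a ⟨le_rfl, le_rfl⟩)
  | succ b hab ih =>
    exact (ih fun j hj => h j ⟨hj.1, by linarith [hj.2]⟩).trans
      (.single (h b ⟨hab, by linarith⟩) (h (b + 1) ⟨by linarith, le_rfl⟩) (hr b))

end Connectivity

section Grid

/-- Adjacency of grid cells sharing a horizontal edge. -/
def vadj (u v : ℤ × ℤ) : Prop := u.1 = v.1 ∧ (v.2 = u.2 + 1 ∨ u.2 = v.2 + 1)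

/-- Adjacency of grid cells sharing an edge. -/
def adj4 (u v : ℤ × ℤ) : Prop := vadj u v ∨ vadj u.swap v.swap

/-- Grid cells which are equal or share an edge or a corner. -/
def adj8 (u v : ℤ × ℤ) : Prop := |u.1 - v.1| ≤ 1 ∧ |u.2 - v.2| ≤ 1

/-- A set of grid cells in which two cells sharing only a corner always have a common neighbour;
equivalently the union of the closed cells is a 2-manifold with boundary. -/
def WellComposed (D : Set (ℤ × ℤ)) : Prop :=
  ∀ u ∈ D, ∀ v ∈ D, adj8 u v → (v.1, u.2) ∈ D ∨ (u.1, v.2) ∈ D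

/-- The cells `{i} × [c, d)` form a maximal vertical segment of `D`. -/
structure IsRun (D : Set (ℤ × ℤ)) (i c d : ℤ) : Prop where
  lt : c < d
  subset : {i} ×ˢ Ico c d ⊆ D
  below_notMem : (i, c - 1) ∉ D
  above_notMem : (i, d) ∉ D

instance : Std.Symm vadj := ⟨fun _ _ h => ⟨h.1.symm, h.2.symm⟩⟩

instance : Std.Symm adj4 := ⟨fun _ _ h => h.imp (Std.Symm.symm _ _) (Std.Symm.symm _ _)⟩

variable {D : Set (ℤ × ℤ)} {u v k : ℤ × ℤ} {i c d : ℤ}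

lemma adj4_of_vadj (h : vadj u v) : adj4 u v := Or.inl h

lemma connIn_vadj_column {a b : ℤ} (h : ∀ j ∈ uIcc a b, (i, j) ∈ D) :
    ConnIn vadj D (i, a) (i, b) :=
  connIn_of_forall_mem_uIcc (g := fun j => (i, j)) (fun _ => ⟨rfl, Or.inl rfl⟩) h

lemma connIn_adj4_column {a b : ℤ} (h : ∀ j ∈ uIcc a b, (i, j) ∈ D) :
    ConnIn adj4 D (i, a) (i, b) :=
  (connIn_vadj_column h).mono_rel fun _ _ => adj4_of_vadj

lemma connIn_adj4_row {j a b : ℤ} (h : ∀ i ∈ uIcc a b, (i, j) ∈ D) :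
    ConnIn adj4 D (a, j) (b, j) :=
  connIn_of_forall_mem_uIcc (g := fun i => (i, j)) (fun _ => Or.inr ⟨rfl, Or.inl rfl⟩) h

lemma isConn_adj4_univ : IsConn adj4 univ := fun _ _ v _ =>
  (connIn_adj4_column (b := v.2) fun _ _ => mem_univ _).trans
    (connIn_adj4_row fun _ _ => mem_univ _)

lemma isConn_adj4_compl_square (M : ℤ) : IsConn adj4 (Ioo (-M) M ×ˢ Ioo (-M) M)ᶜ := by
  have hfar (i j : ℤ) : (i, j) ∈ (Ioo (-M) M ×ˢ Ioo (-M) M)ᶜ ↔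
      (i ≤ -M ∨ M ≤ i) ∨ j ≤ -M ∨ M ≤ j := by
    simp only [mem_compl_iff, mem_prod, mem_Ioo]
    omega
  refine isConn_of_forall_connIn (k := (M, M)) fun v hv => ConnIn.symm ?_
  rcases (hfar v.1 v.2).1 hv with hv | hv
  · exact (connIn_adj4_column fun j _ => (hfar _ _).2 (Or.inl hv)).trans
      (connIn_adj4_row fun i _ => (hfar _ _).2 (Or.inr (Or.inr le_rfl)))
  · exact (connIn_adj4_row fun i _ => (hfar _ _).2 (Or.inr hv)).trans
      (connIn_adj4_column fun j _ => (hfar _ _).2 (Or.inl (Or.inr le_rfl)))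

lemma exists_subset_square (hD : D.Finite) : ∃ M : ℤ, D ⊆ Ioo (-M) M ×ˢ Ioo (-M) M := by
  obtain ⟨M₁, hM₁⟩ := (hD.image fun k => |k.1|).bddAbove
  obtain ⟨M₂, hM₂⟩ := (hD.image fun k => |k.2|).bddAbove
  refine ⟨max M₁ M₂ + 1, fun k hk => ?_⟩
  have h₁ := hM₁ (mem_image_of_mem _ hk)
  have h₂ := hM₂ (mem_image_of_mem _ hk)
  simp only [abs_le] at h₁ h₂
  simp only [mem_prod, mem_Ioo]
  omega

namespace WellComposed

lemma compl (hD : WellComposed D) : WellComposed Dᶜ := by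
  intro u hu v hv huv
  by_contra! h
  rcases hD (v.1, u.2) (not_not.1 h.1) (u.1, v.2) (not_not.1 h.2)
    ⟨by rw [abs_sub_comm]; exact huv.1, huv.2⟩ with h | h
  exacts [hu h, hv h]

lemma connIn_of_adj8 (hD : WellComposed D) (hu : u ∈ D) (hv : v ∈ D) (h : adj8 u v) :
    ConnIn adj4 D u v := by
  have huIcc {a b j : ℤ} (hab : |a - b| ≤ 1) (hj : j ∈ uIcc a b) : j = a ∨ j = b := by
    rw [abs_le] at hab
    rw [mem_uIcc] at hj
    omega
  rcases hD u hu v hv h with hc | hc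
  · refine (connIn_adj4_row (j := u.2) (b := v.1) fun i hi => ?_).trans
      (connIn_adj4_column (i := v.1) fun j hj => ?_)
    · rcases huIcc h.1 hi with rfl | rfl <;> assumption
    · rcases huIcc h.2 hj with rfl | rfl <;> assumption
  · refine (connIn_adj4_column (i := u.1) (b := v.2) fun j hj => ?_).trans
      (connIn_adj4_row (j := v.2) fun i hi => ?_)
    · rcases huIcc h.2 hj with rfl | rfl <;> assumption
    · rcases huIcc h.1 hi with rfl | rfl <;> assumption

lemma compIn (hD : WellComposed D) (o : ℤ × ℤ) : WellComposed (compIn adj4 D o) := by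
  intro u hu v hv huv
  have hc {a b : ℤ × ℤ} (ha : a ∈ _root_.compIn adj4 D o) (hb : b ∈ D) (hab : adj8 a b) :
      b ∈ _root_.compIn adj4 D o := ha.trans (hD.connIn_of_adj8 ha.right_mem hb hab)
  exact (hD u hu.right_mem v hv.right_mem huv).imp
    (fun h => hc hu h ⟨huv.1, by simp⟩) fun h => hc hu h ⟨by simp, huv.2⟩

end WellComposed

lemma exists_isRun (hD : D.Finite) (hk : k ∈ D) : ∃ c d, IsRun D k.1 c d ∧ k.2 ∈ Ico c d := by
  obtain ⟨M, hM⟩ := exists_subset_square hD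
  have hkM := hM hk
  obtain ⟨d, ⟨hkd, hd⟩, hd_least⟩ := Int.exists_least_of_bdd (P := fun j => k.2 < j ∧ (k.1, j) ∉ D)
    ⟨k.2, fun z hz => hz.1.le⟩ ⟨M, hkM.2.2, fun h => (hM h).2.2.false⟩
  obtain ⟨c, ⟨hck, hc⟩, hc_greatest⟩ := Int.exists_greatest_of_bdd
    (P := fun j => j < k.2 ∧ (k.1, j) ∉ D)
    ⟨k.2, fun z hz => hz.1.le⟩ ⟨-M, hkM.2.1, fun h => (hM h).2.1.false⟩
  refine ⟨c + 1, d, ⟨by omega, ?_, by rwa [add_sub_cancel_right], hd⟩, by omega, hkd⟩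
  rintro ⟨i, j⟩ ⟨rfl, hcj, hjd⟩
  dsimp only at hcj hjd
  by_contra hj
  rcases lt_trichotomy j k.2 with h | rfl | h
  · have := hc_greatest j ⟨h, hj⟩; omega
  · exact hj hk
  · have := hd_least j ⟨h, hj⟩; omega

lemma IsRun.row_mem {j : ℤ} (hR : IsRun D i c d) (hj : (i, j) ∈ D) (hjcd : j ∈ Icc (c - 1) d) :
    j ∈ Ico c d := by
  have hc : j ≠ c - 1 := fun h => hR.below_notMem (h ▸ hj)
  have hd : j ≠ d := fun h => hR.above_notMem (h ▸ hj)
  simp only [mem_Icc, mem_Ico] at hjcd ⊢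
  omega

lemma IsRun.compIn_eq (hR : IsRun D k.1 c d) (hk : k.2 ∈ Ico c d) :
    compIn vadj D k = {k.1} ×ˢ Ico c d := by
  refine Subset.antisymm (fun v hv => ConnIn.right_mem (r := vadj) (u := k) ?_) ?_
  · refine hv.mem_of_closed ⟨rfl, hk⟩ ?_
    rintro ⟨i, j⟩ ⟨rfl, hj⟩ - ⟨i', j'⟩ hb ⟨rfl, hjj'⟩
    exact ⟨rfl, hR.row_mem hb (by simp only [mem_Ico, mem_Icc] at hj hjj' ⊢; omega)⟩
  · rintro ⟨i, j⟩ ⟨rfl, hj⟩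
    exact connIn_vadj_column (a := k.2) fun j' hj' =>
      hR.subset ⟨rfl, ordConnected_Ico.uIcc_subset hk hj hj'⟩

end Grid

section Jordan

variable {r : ℤ × ℤ → ℤ × ℤ → Prop} {D : Set (ℤ × ℤ)} {a b t t' : ℤ × ℤ} {X p q j : ℤ}

/-- The indicator of the cells of column `x` above the line `y`. -/
def columnAbove (x y : ℤ) (c : ℤ × ℤ) : ℤ := if c.1 = x ∧ y ≤ c.2 then 1 else 0

/-- The witness `f x y` is the net number of times the path crosses the vertical line `x` from left
to right above the point `(x, y)`. -/
lemma exists_crossing_number [Std.Symm r] (hr : ∀ u v, r u v → adj4 u v) (hab : ConnIn r D a b) :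
    ∃ f : ℤ → ℤ → ℤ,
      (∀ x y, ((x - 1, y) ∈ D → (x, y) ∈ D → ¬r (x - 1, y) (x, y)) → f x y = f x (y + 1)) ∧
      ∀ x y, ((x, y - 1) ∈ D → (x, y) ∉ D) →
        f x y - f (x + 1) y = columnAbove x y b - columnAbove x y a := by
  refine hab.induction ⟨0, by simp, by simp⟩ ?_
  rintro ⟨i, j⟩ hc ⟨i', j'⟩ hc' hcc' ⟨f, hfV, hfH⟩
  have hadj := hr _ _ hcc'
  simp only [adj4, vadj, Prod.swap_prod_mk] at hadj
  refine ⟨fun x y => f x y + if y ≤ j then (if x ≤ i' then 1 else 0) - (if x ≤ i then 1 else 0)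
    else 0, fun x y h => ?_, fun x y h => ?_⟩
  · have hV := hfV x y h
    have hright : ¬(x = i' ∧ i' = i + 1 ∧ y = j ∧ j = j') := by
      rintro ⟨rfl, rfl, rfl, rfl⟩
      rw [add_sub_cancel_right] at h
      exact h hc hc' hcc'
    have hleft : ¬(x = i ∧ i = i' + 1 ∧ y = j ∧ j = j') := by
      rintro ⟨rfl, rfl, rfl, rfl⟩
      rw [add_sub_cancel_right] at h
      exact h hc' hc (Std.Symm.symm _ _ hcc')
    dsimp only
    split_ifs <;> omega
  · have hH := hfH x y h
    have hup : ¬(x = i ∧ i = i' ∧ y = j' ∧ j' = j + 1) := by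
      rintro ⟨rfl, rfl, rfl, rfl⟩
      rw [add_sub_cancel_right] at h
      exact h hc hc'
    have hdown : ¬(x = i ∧ i = i' ∧ y = j ∧ j = j' + 1) := by
      rintro ⟨rfl, rfl, rfl, rfl⟩
      rw [add_sub_cancel_right] at h
      exact h hc' hc
    simp only [columnAbove] at hH ⊢
    split_ifs at hH ⊢ <;> omega

/-- Adjacency of cells, except across the segment `{X} × [p, q]`. -/
def offGate (X p q : ℤ) (u v : ℤ × ℤ) : Prop :=
  adj4 u v ∧ ¬(u.2 = v.2 ∧ u.2 ∈ Ico p q ∧ max u.1 v.1 = X)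

instance : Std.Symm (offGate X p q) where
  symm _ _ h := ⟨Std.Symm.symm _ _ h.1,
    fun ⟨hrow, hmem, hX⟩ => h.2 ⟨hrow.symm, hrow ▸ hmem, (max_comm _ _).trans hX⟩⟩

lemma eq_of_connIn_of_corner_eq {F : ℤ → ℤ → ℤ} {S : Set (ℤ × ℤ)} (hab : ConnIn adj4 S a b)
    (hF : ∀ s ∈ S, ∀ x ∈ Icc s.1 (s.1 + 1), ∀ y ∈ Icc s.2 (s.2 + 1), F x y = F s.1 s.2) :
    F a.1 a.2 = F b.1 b.2 := by
  refine hab.induction rfl fun c hc c' hc' hcc' ih => ?_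
  simp only [adj4, vadj, Prod.fst_swap, Prod.snd_swap] at hcc'
  rw [ih, ← hF c hc (max c.1 c'.1) (by simp only [mem_Icc]; omega) (max c.2 c'.2)
      (by simp only [mem_Icc]; omega),
    hF c' hc' _ (by simp only [mem_Icc]; omega) _ (by simp only [mem_Icc]; omega)]

/-- The potential is the crossing number corrected by the closing step across the gate. -/
lemma exists_potential_of_connIn_offGate (hj : j ∈ Ico p q)
    (hpath : ConnIn (offGate X p q) D (X - 1, j) (X, j)) :
    ∃ F : ℤ → ℤ → ℤ,
      (∀ s ∈ Dᶜ, ∀ x ∈ Icc s.1 (s.1 + 1), ∀ y ∈ Icc s.2 (s.2 + 1), F x y = F s.1 s.2) ∧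
      F X q = F X p + 1 := by
  obtain ⟨f, hfV, hfH⟩ := exists_crossing_number (fun _ _ h => h.1) hpath
  let F : ℤ → ℤ → ℤ := fun x y => f x y - columnAbove x y (X, j)
  have hH (x y : ℤ) (h : (x, y - 1) ∈ D → (x, y) ∉ D) : F x y = F (x + 1) y := by
    have := hfH x y h
    simp only [F, columnAbove] at this ⊢
    split_ifs at this ⊢ <;> omega
  have hV (x y : ℤ) (h : (x - 1, y) ∈ D → (x, y) ∉ D) : F x y = F x (y + 1) := by
    have hne : ¬(x = X ∧ y = j) := by
      rintro ⟨rfl, rfl⟩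
      exact h hpath.1 hpath.right_mem
    have := hfV x y fun h₁ h₂ => (h h₁ h₂).elim
    simp only [F, columnAbove]
    split_ifs <;> omega
  refine ⟨F, ?_, ?_⟩
  · rintro ⟨i, l⟩ hs x hx y hy
    have hbottom : F i l = F (i + 1) l := hH i l fun _ => hs
    have hleft : F i l = F i (l + 1) := hV i l fun _ => hs
    have htop : F i (l + 1) = F (i + 1) (l + 1) :=
      hH i (l + 1) fun h => (hs (by rwa [add_sub_cancel_right] at h)).elim
    simp only [mem_Icc] at hx hy ⊢
    obtain rfl | rfl : x = i ∨ x = i + 1 := by omega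
    all_goals
      obtain rfl | rfl : y = l ∨ y = l + 1 := by omega
      all_goals omega
  · have hgate : f X p = f X q := by
      have hle := (hj.1.trans_lt hj.2).le
      refine (Int.leInduction (motive := fun y _ => y ≤ q → f X p = f X y) (fun _ => rfl)
        (fun y hy ih hyq => (ih (by omega)).trans (hfV X y fun _ _ h => h.2 ?_)) q hle) le_rfl
      exact ⟨rfl, ⟨hy, by omega⟩, max_eq_right (by omega)⟩
    have hp : F X p = f X p - 1 := by simp [F, columnAbove, hj.1]
    have hq : F X q = f X q := by simp [F, columnAbove, hj.2]
    omega

/-- A discrete Jordan curve theorem: a path around a gate separates the two ends of the gate. -/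
lemma not_connIn_compl_of_connIn_offGate (hj : j ∈ Ico p q)
    (hpath : ConnIn (offGate X p q) D (X - 1, j) (X, j))
    (ht : t ∈ Icc (X - 1) X ×ˢ {p - 1}) (ht' : t' ∈ Icc (X - 1) X ×ˢ {q}) :
    ¬ConnIn adj4 Dᶜ t t' := by
  intro hconn
  obtain ⟨F, hcorner, hjump⟩ := exists_potential_of_connIn_offGate hj hpath
  have hFt := hcorner t hconn.1 X (by have := ht.1; simp only [mem_Icc] at this ⊢; omega) p
    (by have := ht.2; simp only [mem_singleton_iff, mem_Icc] at this ⊢; omega)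
  have hFt' := hcorner t' hconn.right_mem X
    (by have := ht'.1; simp only [mem_Icc] at this ⊢; omega) q
    (by have := ht'.2; simp only [mem_singleton_iff, mem_Icc] at this ⊢; omega)
  have := eq_of_connIn_of_corner_eq hconn hcorner
  omega

lemma connIn_offGate_of_notMem_run {x i c d e f : ℤ} (hx : x = i - 1 ∨ x = i + 1)
    (hDR : ConnIn adj4 (D \ {i} ×ˢ Ico c d) a b) :
    ConnIn (offGate (max x i) (max c e) (min d f)) D a b := by
  refine hDR.induction (.refl hDR.1.1) fun u hu v hv huv hau =>
    hau.trans (.single hu.1 hv.1 ⟨huv, ?_⟩)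
  rintro ⟨hrow, hmem, hX⟩
  have hui : ¬(u.1 = i ∧ u.2 ∈ Ico c d) := hu.2
  have hvi : ¬(v.1 = i ∧ v.2 ∈ Ico c d) := hv.2
  simp only [adj4, vadj, Prod.fst_swap, Prod.snd_swap] at huv
  simp only [mem_Ico] at hmem hui hvi
  omega

lemma IsRun.connIn_offGate {i c d j j' : ℤ} (hR : IsRun D i c d) (hj : j ∈ Ico c d)
    (hj' : j' ∈ Ico c d) : ConnIn (offGate X p q) D (i, j) (i, j') := by
  refine connIn_of_forall_mem_uIcc (g := fun j => (i, j)) (fun l => ⟨Or.inl ⟨rfl, Or.inl rfl⟩, ?_⟩)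
    fun l hl => hR.subset ⟨rfl, ordConnected_Ico.uIcc_subset hj hj' hl⟩
  rintro ⟨hrow, -⟩
  omega

/-- A second neighbouring run would give a path around the common side of the two runs. -/
lemma IsRun.mem_of_adjacent {i c d x e f x' j' : ℤ} (hDc : IsConn adj4 Dᶜ) (hR : IsRun D i c d)
    (hcut : IsConn adj4 (D \ {i} ×ˢ Ico c d)) (hL : IsRun D x e f) (hx : x = i - 1 ∨ x = i + 1)
    (hjR : j ∈ Ico c d) (hjL : j ∈ Ico e f) (hl : (x', j') ∈ D) (hx' : x' = i - 1 ∨ x' = i + 1)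
    (hj' : j' ∈ Ico c d) : (x', j') ∈ {x} ×ˢ Ico e f := by
  by_contra hlL
  have hnotR {y k : ℤ} (hy : y = i - 1 ∨ y = i + 1) : (y, k) ∉ {i} ×ˢ Ico c d := by
    rintro ⟨rfl, -⟩
    omega
  have hij' : (i, j') ∈ D := hR.subset ⟨rfl, hj'⟩
  have hcross : offGate (max x i) (max c e) (min d f) (x', j') (i, j') := by
    refine ⟨Or.inr ⟨rfl, by dsimp only [Prod.swap]; omega⟩, fun ⟨_, hmem, hX⟩ => hlL ⟨?_, ?_⟩⟩ <;>
    · simp only [mem_singleton_iff, mem_Ico] at hmem hX ⊢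
      omega
  have hpath : ConnIn (offGate (max x i) (max c e) (min d f)) D (x, j) (i, j) :=
    (connIn_offGate_of_notMem_run hx
      (hcut (x, j) ⟨hL.subset ⟨rfl, hjL⟩, hnotR hx⟩ (x', j') ⟨hl, hnotR hx'⟩)).trans
    ((ConnIn.single hl hij' hcross).trans (hR.connIn_offGate hj' hjR))
  have hpath' : ConnIn (offGate (max x i) (max c e) (min d f)) D (max x i - 1, j) (max x i, j) := by
    rcases hx with rfl | rfl
    · simpa using hpath
    · simpa using hpath.symm
  obtain ⟨t, htD, ht⟩ : ∃ t ∉ D, t ∈ Icc (max x i - 1) (max x i) ×ˢ {max c e - 1} := by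
    rcases le_total c e with h | h
    · exact ⟨(x, e - 1), hL.below_notMem, ⟨by omega, by omega⟩, by simp [h]⟩
    · exact ⟨(i, c - 1), hR.below_notMem, ⟨by omega, by omega⟩, by simp [h]⟩
  obtain ⟨t', htD', ht'⟩ : ∃ t ∉ D, t ∈ Icc (max x i - 1) (max x i) ×ˢ {min d f} := by
    rcases le_total d f with h | h
    · exact ⟨(i, d), hR.above_notMem, ⟨by omega, by omega⟩, by simp [h]⟩
    · exact ⟨(x, f), hL.above_notMem, ⟨by omega, by omega⟩, by simp [h]⟩
  refine not_connIn_compl_of_connIn_offGate ?_ hpath' ht ht' (hDc t htD t' htD')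
  exact ⟨max_le hjR.1 hjL.1, lt_min hjR.2 hjL.2⟩

end Jordan

section DigitalDisk

variable {D S : Set (ℤ × ℤ)} {k₀ h o : ℤ × ℤ} {i c d x e f j : ℤ}

/-- A digital disk: a finite well-composed set of cells which is connected and has a connected
complement. -/
structure IsDigitalDisk (D : Set (ℤ × ℤ)) : Prop where
  finite : D.Finite
  isConn : IsConn adj4 D
  wellComposed : WellComposed D
  isConn_compl : IsConn adj4 Dᶜ

/-- The run `{i} × [c, d)` of `D` is a leaf attached to the run `{x} × [e, f)`: it touches no other
cells of `D`, not even at a corner. -/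
structure IsLeafRun (D : Set (ℤ × ℤ)) (i c d x e f : ℤ) : Prop where
  isRun : IsRun D i c d
  isRun_base : IsRun D x e f
  adjacent : x = i - 1 ∨ x = i + 1
  overlap : max c e < min d f
  mem_of_near : ∀ v ∈ D, v.1 ∈ Icc (i - 1) (i + 1) → v.2 ∈ Icc (c - 1) d →
    v ∈ {i} ×ˢ Ico c d ∪ {x} ×ˢ Ico e f

lemma IsRun.exists_side_neighbor (hR : IsRun D i c d) (hD : IsConn adj4 D)
    (hne : (D \ {i} ×ˢ Ico c d).Nonempty) :
    ∃ x j, (x, j) ∈ D ∧ (x = i - 1 ∨ x = i + 1) ∧ j ∈ Ico c d := by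
  by_contra! hno
  obtain ⟨v, hvD, hv⟩ := hne
  have hcR : (i, c) ∈ {i} ×ˢ Ico c d := ⟨rfl, le_rfl, hR.lt⟩
  refine hv ((hD (i, c) (hR.subset hcR) v hvD).mem_of_closed hcR ?_).right_mem
  rintro ⟨_, l⟩ ⟨rfl, hl⟩ - ⟨x, j⟩ hxj hadj
  simp only [adj4, vadj, Prod.swap_prod_mk] at hadj
  dsimp only at hl
  rcases hadj with ⟨rfl, hjl⟩ | ⟨rfl, hx⟩
  · exact ⟨rfl, hR.row_mem hxj (by simp only [mem_Ico, mem_Icc] at hl ⊢; omega)⟩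
  · exact absurd hl (hno x l hxj (by omega))

namespace IsDigitalDisk

lemma sdiff_run (hD : IsDigitalDisk D) (hR : IsRun D i c d)
    (hcut : IsConn adj4 (D \ {i} ×ˢ Ico c d)) : IsDigitalDisk (D \ {i} ×ˢ Ico c d) where
  finite := hD.finite.subset sdiff_subset
  isConn := hcut
  wellComposed u hu v hv huv := by
    have hcol {a b a' : ℤ} (hab : |b - a'| ≤ 1) (h : (a, b) ∈ D \ {i} ×ˢ Ico c d)
        (h' : (a, a') ∈ D) : (a, a') ∈ D \ {i} ×ˢ Ico c d := by
      refine ⟨h', ?_⟩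
      rintro ⟨rfl, ha'⟩
      refine h.2 ⟨rfl, hR.row_mem h.1 ?_⟩
      rw [abs_le] at hab
      simp only [mem_Ico, mem_Icc] at ha' ⊢
      omega
    exact (hD.wellComposed u hu.1 v hv.1 huv).imp (hcol (abs_sub_comm u.2 v.2 ▸ huv.2) hv)
      (hcol huv.2 hu)
  isConn_compl := by
    have hsub : Dᶜ ⊆ (D \ {i} ×ˢ Ico c d)ᶜ := compl_subset_compl.2 sdiff_subset
    refine isConn_of_forall_connIn (k := (i, d)) ?_
    rintro ⟨x, j⟩ hv
    by_cases hvD : (x, j) ∈ D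
    · obtain ⟨rfl, hj⟩ : (x, j) ∈ {i} ×ˢ Ico c d := by_contra fun h => hv ⟨hvD, h⟩
      refine connIn_adj4_column fun j' hj' hmem => hmem.2 ⟨rfl, hR.row_mem hmem.1 ?_⟩
      simp only [mem_Ico, mem_uIcc, mem_Icc] at hj hj' ⊢
      omega
    · exact (hD.isConn_compl _ hR.above_notMem _ hvD).mono hsub

lemma exists_isLeafRun (hD : IsDigitalDisk D) (hR : IsRun D i c d)
    (hcut : IsConn adj4 (D \ {i} ×ˢ Ico c d)) (hne : (D \ {i} ×ˢ Ico c d).Nonempty) :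
    ∃ x e f, IsLeafRun D i c d x e f := by
  obtain ⟨x, j, hxj, hx, hj⟩ := hR.exists_side_neighbor hD.isConn hne
  obtain ⟨e, f, hL, hjL⟩ := exists_isRun hD.finite hxj
  dsimp only at hL hjL
  have hbase {x' j' : ℤ} (hl : (x', j') ∈ D) (hx' : x' = i - 1 ∨ x' = i + 1) (hj' : j' ∈ Ico c d) :
      (x', j') ∈ {x} ×ˢ Ico e f :=
    hR.mem_of_adjacent hD.isConn_compl hcut hL hx hj hjL hl hx' hj'
  refine ⟨x, e, f, hR, hL, hx, max_lt (lt_min hR.lt (hj.1.trans_lt hjL.2))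
    (lt_min (hjL.1.trans_lt hj.2) hL.lt), ?_⟩
  rintro ⟨x', j'⟩ hv hx' hj'
  rcases eq_or_ne x' i with rfl | hxi
  · exact Or.inl ⟨rfl, hR.row_mem hv hj'⟩
  right
  dsimp only at hx' hj'
  replace hx' : x' = i - 1 ∨ x' = i + 1 := by simp only [mem_Icc] at hx'; omega
  by_cases hin : j' ∈ Ico c d
  · exact hbase hv hx' hin
  obtain ⟨j₁, hj₁, hj₁j', hend⟩ : ∃ j₁ ∈ Ico c d, |j₁ - j'| ≤ 1 ∧ (i, j') ∉ D := by
    have := hR.lt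
    obtain rfl | rfl : j' = c - 1 ∨ j' = d := by simp only [mem_Icc, mem_Ico] at hin hj'; omega
    · exact ⟨c, ⟨le_rfl, hR.lt⟩, by simp, hR.below_notMem⟩
    · exact ⟨j' - 1, ⟨by omega, by omega⟩, by simp, hR.above_notMem⟩
  have hcorner : (x', j₁) ∈ D :=
    (hD.wellComposed (i, j₁) (hR.subset ⟨rfl, hj₁⟩) (x', j') hv
      ⟨by rw [abs_le]; dsimp only; omega, hj₁j'⟩).resolve_right hend
  obtain ⟨rfl, hj₁L⟩ := hbase hcorner hx' hj₁
  refine ⟨rfl, hL.row_mem hv ?_⟩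
  rw [abs_le] at hj₁j'
  simp only [mem_Icc, mem_Ico] at hj₁L ⊢
  omega

lemma exists_collapse (hD : IsDigitalDisk D) (hk₀ : k₀ ∈ D)
    (hne : (D \ compIn vadj D k₀).Nonempty) :
    ∃ i c d x e f, IsLeafRun D i c d x e f ∧ IsDigitalDisk (D \ {i} ×ˢ Ico c d) ∧
      Disjoint ({i} ×ˢ Ico c d) (compIn vadj D k₀) := by
  obtain ⟨k, hk, hcut⟩ :=
    exists_isConn_sdiff_compIn (fun _ _ => adj4_of_vadj) hD.finite hD.isConn hk₀ hne
  obtain ⟨c, d, hR, hkR⟩ := exists_isRun hD.finite hk.1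
  have hdisj : Disjoint (compIn vadj D k) (compIn vadj D k₀) :=
    disjoint_left.2 fun v hv hv₀ => hk.2 (hv₀.trans hv.symm)
  rw [hR.compIn_eq hkR] at hcut hdisj
  have hk₀R : k₀ ∉ {k.1} ×ˢ Ico c d := fun h => disjoint_left.1 hdisj h (mem_compIn_self hk₀)
  obtain ⟨x, e, f, hleaf⟩ := hD.exists_isLeafRun hR hcut ⟨k₀, hk₀, hk₀R⟩
  exact ⟨k.1, c, d, x, e, f, hleaf, hD.sdiff_run hR hcut, hdisj⟩

end IsDigitalDisk

lemma isDigitalDisk_compIn_compl (hS : IsConn adj4 S) (hwc : WellComposed S) (hne : S.Nonempty)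
    (hfin : (compIn adj4 Sᶜ h).Finite) : IsDigitalDisk (compIn adj4 Sᶜ h) where
  finite := hfin
  isConn := isConn_compIn
  wellComposed := hwc.compl.compIn h
  isConn_compl := isConn_compl_compIn_compl isConn_adj4_univ hS hne h

lemma isDigitalDisk_compl_compIn_compl (hS : IsConn adj4 S) (hwc : WellComposed S)
    (hne : S.Nonempty) (hfin : (compIn adj4 Sᶜ o)ᶜ.Finite) :
    IsDigitalDisk (compIn adj4 Sᶜ o)ᶜ where
  finite := hfin
  isConn := isConn_compl_compIn_compl isConn_adj4_univ hS hne o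
  wellComposed := (hwc.compl.compIn o).compl
  isConn_compl := (compl_compl (compIn adj4 Sᶜ o)).symm ▸ isConn_compIn

lemma exists_finite_compl_compIn_compl (hS : S.Finite) :
    ∃ o ∉ S, (compIn adj4 Sᶜ o)ᶜ.Finite := by
  obtain ⟨M, hM⟩ := exists_subset_square hS
  have hfar : (M, M) ∉ Ioo (-M) M ×ˢ Ioo (-M) M := fun h => lt_irrefl _ h.1.2
  refine ⟨(M, M), fun h => hfar (hM h),
    ((finite_Ioo (-M) M).prod (finite_Ioo (-M) M)).subset fun v hv => ?_⟩
  by_contra hvM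
  exact hv ((isConn_adj4_compl_square M _ hfar v hvM).mono (compl_subset_compl.2 hM))

lemma isDigitalDisk_or_exists_hole (hfin : S.Finite) (hne : S.Nonempty) (hS : IsConn adj4 S)
    (hwc : WellComposed S)
    (htwo : ∀ a ∉ S, ∀ b ∉ S, ∀ c ∉ S,
      ConnIn adj4 Sᶜ a b ∨ ConnIn adj4 Sᶜ a c ∨ ConnIn adj4 Sᶜ b c) :
    IsDigitalDisk S ∨ ∃ H : Set (ℤ × ℤ), H.Nonempty ∧ IsDigitalDisk H ∧ IsDigitalDisk (S ∪ H) ∧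
      Disjoint S H ∧ ∀ k ∈ H, ∀ k', adj8 k k' → k' ∈ S ∪ H := by
  obtain ⟨o, ho, hofin⟩ := exists_finite_compl_compIn_compl hfin
  by_cases hall : ∀ v ∉ S, ConnIn adj4 Sᶜ o v
  · exact Or.inl ⟨hfin, hS, hwc, isConn_of_forall_connIn hall⟩
  push Not at hall
  obtain ⟨h, hh, hoh⟩ := hall
  have hHO : compIn adj4 Sᶜ h ⊆ (compIn adj4 Sᶜ o)ᶜ := fun v hv hvo => hoh (hvo.trans hv.symm)
  have hunion : S ∪ compIn adj4 Sᶜ h = (compIn adj4 Sᶜ o)ᶜ := by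
    refine Subset.antisymm (union_subset (fun v hv hvo => hvo.right_mem hv) hHO) fun v hv => ?_
    by_cases hvS : v ∈ S
    · exact Or.inl hvS
    · exact Or.inr (((htwo o ho h hh v hvS).resolve_left hoh).resolve_left hv)
  refine Or.inr ⟨compIn adj4 Sᶜ h, ⟨h, mem_compIn_self hh⟩,
    isDigitalDisk_compIn_compl hS hwc hne (hofin.subset hHO),
    hunion ▸ isDigitalDisk_compl_compIn_compl hS hwc hne hofin,
    disjoint_right.2 fun _ hv => hv.right_mem, fun k hk k' hkk' => ?_⟩
  by_cases hk' : k' ∈ S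
  · exact Or.inl hk'
  · exact Or.inr (hk.trans (hwc.compl.connIn_of_adj8 hk.right_mem hk' hkk'))

end DigitalDisk

section Collapse

variable {a b c d e f p q δ : ℝ} {W : Set (ℝ × ℝ)}

lemma ambientEquiv_trim_above (hab : a < b) (hδ : 0 < δ) (hcq : c + δ ≤ q) (hqd : q ≤ d)
    (hW : q < d → ∀ z ∈ Icc (a - δ) (b + δ) ×ˢ Icc (c - δ) (d + δ), z ∈ W → z.2 ≤ q) :
    AmbientEquiv (Icc (a - δ) (b + δ) ×ˢ Icc (c - δ) (d + δ)) (Icc a b ×ˢ Icc c d ∪ W)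
      (Icc a b ×ˢ Icc c q ∪ W) := by
  rcases hqd.eq_or_lt with rfl | hqd
  · exact .refl _ _
  have hsub : Icc (a - δ) (b + δ) ×ˢ Icc (q - δ) (d + δ) ⊆
      Icc (a - δ) (b + δ) ×ˢ Icc (c - δ) (d + δ) :=
    prod_mono Subset.rfl (Icc_subset_Icc_left (by linarith))
  rw [← Icc_union_Icc_eq_Icc (show c ≤ q by linarith) hqd.le, prod_union,
    union_comm (Icc a b ×ˢ Icc c q), union_assoc]
  refine .mono (ambientEquiv_union_below hab hqd hδ (fun z hz hqz => ?_)
    fun z hz hzq hzab => ?_) hsub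
  · rintro (hzR | hzW)
    · exact hqz.not_ge hzR.2.2
    · exact hqz.not_ge (hW ‹_› z (hsub hz) hzW)
  · exact Or.inl ⟨hzab, by linarith [hz.2.1], hzq⟩

lemma ambientEquiv_trim_below (hab : a < b) (hδ : 0 < δ) (hcp : c ≤ p) (hpd : p + δ ≤ d)
    (hW : c < p → ∀ z ∈ Icc (a - δ) (b + δ) ×ˢ Icc (c - δ) (d + δ), z ∈ W → p ≤ z.2) :
    AmbientEquiv (Icc (a - δ) (b + δ) ×ˢ Icc (c - δ) (d + δ)) (Icc a b ×ˢ Icc c d ∪ W)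
      (Icc a b ×ˢ Icc p d ∪ W) := by
  rcases hcp.eq_or_lt with rfl | hcp
  · exact .refl _ _
  have hsub : Icc (a - δ) (b + δ) ×ˢ Icc (c - δ) (p + δ) ⊆
      Icc (a - δ) (b + δ) ×ˢ Icc (c - δ) (d + δ) :=
    prod_mono Subset.rfl (Icc_subset_Icc_right (by linarith))
  rw [← Icc_union_Icc_eq_Icc hcp.le (show p ≤ d by linarith), prod_union, union_assoc]
  refine .mono (ambientEquiv_union_above hab hcp hδ (fun z hz hzp => ?_)
    fun z hz hpz hzab => ?_) hsub
  · rintro (hzR | hzW)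
    · exact hzp.not_ge hzR.2.1
    · exact hzp.not_ge (hW ‹_› z (hsub hz) hzW)
  · exact Or.inl ⟨hzab, hpz, by linarith [hz.2.2]⟩

/-- Trim the rectangle to the height of the common side, then absorb what is left. -/
lemma ambientEquiv_collapse {a' b' : ℝ} (hab : a < b) (hδ : 0 < δ)
    (hpq : max c e + δ ≤ min d f) (ha'b' : b' = a ∧ a' ≤ a - δ ∨ a' = b ∧ b + δ ≤ b')
    (hW : ∀ z ∈ Icc (a - δ) (b + δ) ×ˢ Icc (c - δ) (d + δ),
      z ∈ W ↔ z ∈ Icc a' b' ×ˢ Icc e f) :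
    AmbientEquiv (Icc (a - δ) (b + δ) ×ˢ Icc (c - δ) (d + δ)) (Icc a b ×ˢ Icc c d ∪ W) W := by
  set p := max c e
  set q := min d f
  have hcp : c ≤ p := le_max_left c e
  have hep : e ≤ p := le_max_right c e
  have hqd : q ≤ d := min_le_left d f
  have hqf : q ≤ f := min_le_right d f
  have hN {c' d' : ℝ} (hc : c ≤ c') (hd : d' ≤ d) :
      Icc (a - δ) (b + δ) ×ˢ Icc (c' - δ) (d' + δ) ⊆
        Icc (a - δ) (b + δ) ×ˢ Icc (c - δ) (d + δ) :=
    prod_mono Subset.rfl (Icc_subset_Icc (by linarith) (by linarith))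
  have habove : AmbientEquiv _ (Icc a b ×ˢ Icc c d ∪ W) (Icc a b ×ˢ Icc c q ∪ W) :=
    ambientEquiv_trim_above hab hδ (by linarith) hqd fun hqd z hz hzW => by
      rw [show q = f from
        (min_lt_iff.1 hqd).elim (absurd · (lt_irrefl d)) fun h => min_eq_right h.le]
      exact ((hW z hz).1 hzW).2.2
  have hbelow : AmbientEquiv _ (Icc a b ×ˢ Icc c q ∪ W) (Icc a b ×ˢ Icc p q ∪ W) :=
    ambientEquiv_trim_below hab hδ hcp hpq fun hcp z hz hzW => by
      rw [show p = e from
        (lt_max_iff.1 hcp).elim (absurd · (lt_irrefl c)) fun h => max_eq_right h.le]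
      exact ((hW z (hN le_rfl hqd hz)).1 hzW).2.1
  refine (habove.trans (hbelow.mono (hN le_rfl hqd))).trans (.mono ?_ (hN hcp hqd))
  rcases ha'b' with ⟨rfl, ha'⟩ | ⟨rfl, hb'⟩
  · refine ambientEquiv_union_left hab (by linarith) hδ (fun z hz hbz hzW => ?_)
      fun z hz hzb hzpq => ?_
    · exact hbz.not_ge ((hW z (hN hcp hqd hz)).1 hzW).1.2
    · exact (hW z (hN hcp hqd hz)).2
        ⟨⟨ha'.trans hz.1.1, hzb⟩, hep.trans hzpq.1, hzpq.2.trans hqf⟩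
  · refine ambientEquiv_union_right hab (by linarith) hδ (fun z hz hza hzW => ?_)
      fun z hz haz hzpq => ?_
    · exact hza.not_ge ((hW z (hN hcp hqd hz)).1 hzW).1.1
    · exact (hW z (hN hcp hqd hz)).2
        ⟨⟨haz, hz.1.2.trans hb'⟩, hep.trans hzpq.1, hzpq.2.trans hqf⟩

end Collapse

section CellUnions

variable {ξ : ℤ → ℝ} {δ : ℝ} {S T D : Set (ℤ × ℤ)} {i c d x e f m n : ℤ}

/-- The closed cell with index `k` of the grid with lines `ξ` in both directions, enlarged by `δ` on
every side. -/
def cell (ξ : ℤ → ℝ) (δ : ℝ) (k : ℤ × ℤ) : Set (ℝ × ℝ) :=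
  Icc (ξ k.1 - δ) (ξ (k.1 + 1) + δ) ×ˢ Icc (ξ k.2 - δ) (ξ (k.2 + 1) + δ)

/-- The union of the enlarged closed cells with index in `S`. -/
def cellUnion (ξ : ℤ → ℝ) (δ : ℝ) (S : Set (ℤ × ℤ)) : Set (ℝ × ℝ) := ⋃ k ∈ S, cell ξ δ k

lemma cell_zero {k : ℤ × ℤ} :
    cell ξ 0 k = Icc (ξ k.1) (ξ (k.1 + 1)) ×ˢ Icc (ξ k.2) (ξ (k.2 + 1)) := by
  simp only [cell, sub_zero, add_zero]

lemma mem_cellUnion {z : ℝ × ℝ} : z ∈ cellUnion ξ δ S ↔ ∃ k ∈ S, z ∈ cell ξ δ k := by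
  simp only [cellUnion, mem_iUnion, exists_prop]

lemma cell_subset_cellUnion {k : ℤ × ℤ} (hk : k ∈ S) : cell ξ δ k ⊆ cellUnion ξ δ S :=
  subset_biUnion_of_mem hk

lemma cellUnion_mono (h : S ⊆ T) : cellUnion ξ δ S ⊆ cellUnion ξ δ T :=
  biUnion_mono h fun _ _ => le_rfl

lemma cellUnion_union : cellUnion ξ δ (S ∪ T) = cellUnion ξ δ S ∪ cellUnion ξ δ T :=
  biUnion_union S T _

lemma iUnion_Ico_Icc (hξ : Monotone ξ) (hδ : 0 ≤ δ) (hcd : c < d) :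
    ⋃ j ∈ Ico c d, Icc (ξ j - δ) (ξ (j + 1) + δ) = Icc (ξ c - δ) (ξ d + δ) := by
  refine Subset.antisymm (iUnion₂_subset fun j hj => Icc_subset_Icc ?_ ?_) fun w hw => ?_
  · linarith [hξ hj.1]
  · linarith [hξ (Int.add_one_le_iff.2 hj.2)]
  suffices ∃ j ∈ Ico c d, w ∈ Icc (ξ j - δ) (ξ (j + 1) + δ) by simpa only [mem_iUnion, exists_prop]
  induction d, Int.add_one_le_iff.2 hcd using Int.leInduction with
  | base => exact ⟨c, ⟨le_rfl, hcd⟩, hw⟩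
  | succ d hd ih =>
    rcases le_total w (ξ d + δ) with hwd | hwd
    · obtain ⟨j, hj, hwj⟩ := ih (by omega) ⟨hw.1, hwd⟩
      exact ⟨j, ⟨hj.1, hj.2.trans (lt_add_one d)⟩, hwj⟩
    · exact ⟨d, ⟨by omega, lt_add_one d⟩, by linarith, hw.2⟩

lemma cellUnion_rectangle (hξ : Monotone ξ) (hδ : 0 ≤ δ) (hmn : m < n) (hcd : c < d) :
    cellUnion ξ δ (Ico m n ×ˢ Ico c d) =
      Icc (ξ m - δ) (ξ n + δ) ×ˢ Icc (ξ c - δ) (ξ d + δ) := by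
  rw [← iUnion_Ico_Icc hξ hδ hmn, ← iUnion_Ico_Icc hξ hδ hcd, cellUnion, biUnion_prod']
  simp only [iUnion_prod_const]
  simp only [cell, prod_iUnion]

lemma cellUnion_column (hξ : Monotone ξ) (hδ : 0 ≤ δ) (hcd : c < d) :
    cellUnion ξ δ ({i} ×ˢ Ico c d) =
      Icc (ξ i - δ) (ξ (i + 1) + δ) ×ˢ Icc (ξ c - δ) (ξ d + δ) := by
  rw [← cellUnion_rectangle hξ hδ (lt_add_one i) hcd, Ico_add_one_right_eq_Icc, Icc_self]

lemma cellUnion_zero_column (hξ : Monotone ξ) (hcd : c < d) :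
    cellUnion ξ 0 ({i} ×ˢ Ico c d) = Icc (ξ i) (ξ (i + 1)) ×ˢ Icc (ξ c) (ξ d) := by
  simpa only [sub_zero, add_zero] using cellUnion_column hξ le_rfl hcd

/-- A strictly increasing sequence of grid lines with gaps greater than `3 δ`. -/
structure IsGrid (ξ : ℤ → ℝ) (δ : ℝ) : Prop where
  pos : 0 < δ
  gap (i : ℤ) : ξ i + 3 * δ < ξ (i + 1)

namespace IsGrid

variable (hg : IsGrid ξ δ)
include hg

lemma strictMono : StrictMono ξ :=
  strictMono_int_of_lt_succ fun i => by linarith [hg.gap i, hg.pos]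

lemma le_of_le_add (h : ξ m ≤ ξ n + δ) : m ≤ n := by
  by_contra! hmn
  linarith [hg.gap n, hg.pos, hg.strictMono.monotone (Int.add_one_le_iff.2 hmn)]

lemma exists_mem_Ico (w : ℝ) : ∃ j, w ∈ Ico (ξ j) (ξ (j + 1)) := by
  have hmono : Monotone fun i : ℤ => ξ i - 3 * δ * i :=
    monotone_int_of_le_succ fun i => by push_cast; linarith [hg.gap i]
  have hδ : 0 < 3 * δ := by linarith [hg.pos]
  obtain ⟨N, hN⟩ := exists_nat_gt (|w - ξ 0| / (3 * δ))
  rw [div_lt_iff₀ hδ, mul_comm, abs_lt] at hN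
  obtain ⟨j, hj, hj_max⟩ := Int.exists_greatest_of_bdd (P := fun j => ξ j ≤ w)
    ⟨N, fun j hj => by
      by_contra! hNj
      have h₁ := hmono (Int.natCast_nonneg N)
      have h₂ := hg.strictMono hNj
      simp only [Int.cast_zero, Int.cast_natCast] at h₁
      linarith⟩
    ⟨-N, by
      have := hmono (neg_nonpos.2 (Int.natCast_nonneg N))
      simp only [Int.cast_zero, Int.cast_neg, Int.cast_natCast] at this
      linarith⟩
  exact ⟨j, hj, not_le.1 fun h => by have := hj_max (j + 1) h; omega⟩

lemma exists_mem_cell (z : ℝ × ℝ) : ∃ k, z ∈ cell ξ 0 k := by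
  obtain ⟨i, hi⟩ := hg.exists_mem_Ico z.1
  obtain ⟨j, hj⟩ := hg.exists_mem_Ico z.2
  exact ⟨(i, j), by rw [cell_zero]; exact ⟨Ico_subset_Icc_self hi, Ico_subset_Icc_self hj⟩⟩

lemma adj8_of_mem_cell {k l : ℤ × ℤ} {z : ℝ × ℝ} (hk : z ∈ cell ξ δ k) (hl : z ∈ cell ξ 0 l) :
    adj8 k l := by
  have hline {w : ℝ} {m n : ℤ} (hi : w ∈ Icc (ξ m - δ) (ξ (m + 1) + δ))
      (hj : w ∈ Icc (ξ n) (ξ (n + 1))) :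
      |m - n| ≤ 1 := by
    have h₁ := hg.le_of_le_add (hj.1.trans hi.2)
    have h₂ := hg.le_of_le_add (sub_le_iff_le_add.1 (hi.1.trans hj.2))
    exact abs_le.2 ⟨by omega, by omega⟩
  rw [cell_zero] at hl
  exact ⟨hline hk.1 hl.1, hline hk.2 hl.2⟩

end IsGrid

lemma IsLeafRun.ambientEquiv (hL : IsLeafRun D i c d x e f) (hg : IsGrid ξ δ) :
    AmbientEquiv (cellUnion ξ δ ({i} ×ˢ Ico c d)) (cellUnion ξ 0 D)
      (cellUnion ξ 0 (D \ {i} ×ˢ Ico c d)) := by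
  have hmono := hg.strictMono.monotone
  have hcd := hL.isRun.lt
  have hbase : {x} ×ˢ Ico e f ⊆ D \ {i} ×ˢ Ico c d := fun v hv =>
    ⟨hL.isRun_base.subset hv, fun hv' => by
      have := hL.adjacent
      have := hv.1.symm.trans hv'.1
      omega⟩
  rw [← union_sdiff_cancel hL.isRun.subset, cellUnion_union, cellUnion_zero_column hmono hcd,
    union_sdiff_cancel hL.isRun.subset, cellUnion_column hmono hg.pos.le hcd]
  refine ambientEquiv_collapse (a' := ξ x) (b' := ξ (x + 1)) (e := ξ e) (f := ξ f)
    (hg.strictMono (lt_add_one i)) hg.pos ?_ ?_ fun z hz => ⟨fun hzD => ?_, fun hzB => ?_⟩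
  · rw [← hmono.map_max, ← hmono.map_min]
    linarith [hg.gap (max c e), hmono (Int.add_one_le_iff.2 hL.overlap), hg.pos]
  · rcases hL.adjacent with rfl | rfl
    · refine .inl ⟨by rw [sub_add_cancel], ?_⟩
      have := hg.gap (i - 1)
      rw [sub_add_cancel] at this
      linarith [hg.pos]
    · exact .inr ⟨rfl, by linarith [hg.gap (i + 1), hg.pos]⟩
  · obtain ⟨v, hv, hzv⟩ := mem_cellUnion.1 hzD
    rw [cell_zero] at hzv
    have hv₁ : v.1 ∈ Icc (i - 1) (i + 1) := by
      have := hg.le_of_le_add (hzv.1.1.trans hz.1.2)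
      have := hg.le_of_le_add (sub_le_iff_le_add.1 (hz.1.1.trans hzv.1.2))
      exact ⟨by omega, by omega⟩
    have hv₂ : v.2 ∈ Icc (c - 1) d := by
      have := hg.le_of_le_add (hzv.2.1.trans hz.2.2)
      have := hg.le_of_le_add (sub_le_iff_le_add.1 (hz.2.1.trans hzv.2.2))
      exact ⟨by omega, by omega⟩
    rw [← cellUnion_zero_column hmono hL.isRun_base.lt]
    refine cell_subset_cellUnion ((hL.mem_of_near v hv.1 hv₁ hv₂).resolve_left hv.2) ?_
    rwa [cell_zero]
  · rw [← cellUnion_zero_column hmono hL.isRun_base.lt] at hzB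
    exact cellUnion_mono hbase hzB

lemma IsDigitalDisk.ambientEquiv_run (hD : IsDigitalDisk D) (hg : IsGrid ξ δ) {k : ℤ × ℤ}
    (hk : k ∈ D) :
    AmbientEquiv (cellUnion ξ δ (D \ compIn vadj D k)) (cellUnion ξ 0 D)
      (cellUnion ξ 0 (compIn vadj D k)) := by
  induction hn : D.ncard using Nat.strong_induction_on generalizing D with | _ n ih =>
  subst hn
  rcases (D \ compIn vadj D k).eq_empty_or_nonempty with he | hne
  · rw [Subset.antisymm compIn_subset (sdiff_eq_empty.1 he)]
    exact .refl _ _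
  obtain ⟨i, c, d, x, e, f, hL, hD', hdisj⟩ := hD.exists_collapse hk hne
  set R := {i} ×ˢ Ico c d
  have hcR : (i, c) ∈ R := ⟨rfl, le_rfl, hL.isRun.lt⟩
  have hrun : compIn vadj D k ⊆ D \ R := fun v hv =>
    ⟨compIn_subset hv, hdisj.notMem_of_mem_right hv⟩
  have hkD' : k ∈ D \ R := hrun (mem_compIn_self hk)
  have hcomp : compIn vadj (D \ R) k = compIn vadj D k :=
    Subset.antisymm (fun v hv => hv.mono sdiff_subset) fun v hv =>
      (connIn_compIn hv).mono hrun
  have hlt : (D \ R).ncard < D.ncard :=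
    ncard_lt_ncard ⟨sdiff_subset, fun h => (h (hL.isRun.subset hcR)).2 hcR⟩ hD.finite
  have hstep := hL.ambientEquiv hg
  have hrest := ih _ hlt hD' hkD' rfl
  rw [hcomp] at hrest
  refine (hstep.mono (cellUnion_mono fun v hv => ?_)).trans (hrest.mono (cellUnion_mono ?_))
  · exact ⟨hL.isRun.subset hv, hdisj.notMem_of_mem_left hv⟩
  · exact sdiff_subset_sdiff_left sdiff_subset

end CellUnions

section Models

variable {a a' b' b c c' d' d : ℝ}

lemma exists_homeomorph_norm_eq {E F : Type*} [NormedAddCommGroup E] [NormedSpace ℝ E]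
    [NormedAddCommGroup F] [NormedSpace ℝ F] (Λ : E ≃L[ℝ] F) : ∃ Θ : E ≃ₜ F, ∀ z, ‖Θ z‖ = ‖z‖ := by
  have hgauge (z : E) : gauge (Λ ⁻¹' ball 0 1) z = ‖Λ z‖ := by
    have h := congrFun (((normSeminorm ℝ F).comp Λ.toLinearMap).gauge_ball) z
    rwa [Seminorm.ball_comp, ball_normSeminorm, map_zero] at h
  have hconv : Convex ℝ (Λ ⁻¹' ball 0 1) := (convex_ball 0 1).linear_preimage Λ.toLinearMap
  have hnhds : Λ ⁻¹' ball 0 1 ∈ nhds 0 :=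
    Λ.continuous.continuousAt.preimage_mem_nhds (by simpa using ball_mem_nhds (0 : F) one_pos)
  have hbdd : Bornology.IsVonNBounded ℝ (Λ ⁻¹' ball 0 1) := by
    rw [← Λ.image_symm_eq_preimage, NormedSpace.isVonNBounded_iff]
    exact Λ.symm.lipschitz.isBounded_image isBounded_ball
  refine ⟨(gaugeRescaleHomeomorph (ball 0 1) _ (convex_ball 0 1) (ball_mem_nhds 0 one_pos)
    ((NormedSpace.isVonNBounded_iff ℝ).2 isBounded_ball) hconv hnhds hbdd).trans Λ.toHomeomorph,
    fun z => ?_⟩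
  change ‖Λ (gaugeRescale (ball 0 1) (Λ ⁻¹' ball 0 1) z)‖ = ‖z‖
  rw [← hgauge, gauge_gaugeRescale _ (absorbent_nhds_zero hnhds) hbdd, gauge_unit_ball]

/-- `kink c β` as an automorphism of the ordered line. -/
def kinkOrderIso (c : ℝ) {β : ℝ} (hβ : 0 < β) : ℝ ≃o ℝ :=
  (kink_strictMono hβ).orderIsoOfRightInverse (kink c β) (kink c β⁻¹) fun x => by
    simpa only [inv_inv] using kink_inv_kink (c := c) (x := x) (inv_pos.2 hβ)

lemma exists_orderIso_four_points (ha : a < a') (hab : a' < b') (hb : b' < b) :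
    ∃ e : ℝ ≃o ℝ, e a = -2 ∧ e a' = -1 ∧ e b' = 1 ∧ e b = 2 := by
  have ha₀ : 0 < a' - a := sub_pos.2 ha
  have hab₀ : 0 < b' - a' := sub_pos.2 hab
  have hb₀ : 0 < b - b' := sub_pos.2 hb
  set s := (a' - a)⁻¹
  set t := 2 * (b' - a')⁻¹
  have hs : 0 < s := inv_pos.2 ha₀
  have ht : 0 < t := by positivity
  set e₁ : ℝ ≃o ℝ := ((OrderIso.subRight a).trans (OrderIso.mulRight₀ s hs)).trans
    (OrderIso.addRight (-2))
  have he₁ (x) : e₁ x = (x - a) * s - 2 := rfl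
  have he₁' (x) : e₁ x = (x - a') * s - 1 := by
    linear_combination he₁ x + mul_inv_cancel₀ ha₀.ne'
  set e₂ := e₁.trans (kinkOrderIso (-1) (div_pos ht hs))
  have he₂ (x) (hx : a' ≤ x) : e₂ x = (x - a') * t - 1 := by
    change kink (-1) (t / s) (e₁ x) = _
    rw [he₁', kink_of_ge (by nlinarith)]
    field_simp
    ring
  have he₂' (x) (hx : a' ≤ x) : e₂ x = (x - b') * t + 1 := by
    linear_combination he₂ x hx + 2 * mul_inv_cancel₀ hab₀.ne'
  refine ⟨e₂.trans (kinkOrderIso 1 (div_pos (inv_pos.2 hb₀) ht)), ?_, ?_, ?_, ?_⟩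
  · have hea : e₂ a = -2 := by
      change kink (-1) (t / s) (e₁ a) = _
      rw [he₁, sub_self, zero_mul, kink_of_le (by norm_num), zero_sub]
    change kink 1 _ (e₂ a) = _
    rw [hea, kink_of_le (by norm_num)]
  · change kink 1 _ (e₂ a') = _
    rw [he₂ _ le_rfl, sub_self, zero_mul, kink_of_le (by norm_num), zero_sub]
  · change kink 1 _ (e₂ b') = _
    rw [he₂' _ hab.le, sub_self, zero_mul, zero_add, kink_of_le le_rfl]
  · change kink 1 _ (e₂ b) = _
    rw [he₂' _ (hab.trans hb).le, kink_of_ge (by nlinarith)]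
    field_simp
    ring

lemma exists_orderIso_nested_Icc (ha : a < a') (hab : a' < b') (hb : b' < b) :
    ∃ e : ℝ ≃o ℝ, ∀ x, (|e x| ≤ 2 ↔ x ∈ Icc a b) ∧ (|e x| ≤ 1 ↔ x ∈ Icc a' b') ∧
      (|e x| < 1 ↔ x ∈ Ioo a' b') := by
  obtain ⟨e, hea, hea', heb', heb⟩ := exists_orderIso_four_points ha hab hb
  refine ⟨e, fun x => ⟨?_, ?_, ?_⟩⟩
  · rw [abs_le, ← hea, ← heb, e.le_iff_le, e.le_iff_le, mem_Icc]
  · rw [abs_le, ← hea', ← heb', e.le_iff_le, e.le_iff_le, mem_Icc]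
  · rw [abs_lt, ← hea', ← heb', e.lt_iff_lt, e.lt_iff_lt, mem_Ioo]

lemma exists_homeomorph_nested_rectangles (ha : a < a') (hab : a' < b') (hb : b' < b)
    (hc : c < c') (hcd : c' < d') (hd : d' < d) :
    ∃ Θ : ℝ × ℝ ≃ₜ EPlane, ∀ z, (‖Θ z‖ ≤ 2 ↔ z ∈ Icc a b ×ˢ Icc c d) ∧
      (‖Θ z‖ ≤ 1 ↔ z ∈ Icc a' b' ×ˢ Icc c' d') ∧ (‖Θ z‖ < 1 ↔ z ∈ Ioo a' b' ×ˢ Ioo c' d') := by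
  obtain ⟨e, he⟩ := exists_orderIso_nested_Icc ha hab hb
  obtain ⟨f, hf⟩ := exists_orderIso_nested_Icc hc hcd hd
  obtain ⟨Θ, hΘ⟩ := exists_homeomorph_norm_eq
    ((ContinuousLinearEquiv.finTwoArrow ℝ ℝ).symm.trans (EuclideanSpace.equiv (Fin 2) ℝ).symm)
  refine ⟨(e.toHomeomorph.prodCongr f.toHomeomorph).trans Θ, fun z => ?_⟩
  have hnorm : ‖Θ (e z.1, f z.2)‖ = max |e z.1| |f z.2| := hΘ _
  change (‖Θ (e z.1, f z.2)‖ ≤ 2 ↔ _) ∧ (‖Θ (e z.1, f z.2)‖ ≤ 1 ↔ _) ∧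
    (‖Θ (e z.1, f z.2)‖ < 1 ↔ _)
  rw [hnorm, max_le_iff, max_le_iff, max_lt_iff]
  exact ⟨and_congr (he z.1).1 (hf z.2).1, and_congr (he z.1).2.1 (hf z.2).2.1,
    and_congr (he z.1).2.2 (hf z.2).2.2⟩

lemma nonempty_homeomorph_disk (hab : a < b) (hcd : c < d) :
    Nonempty (↥(Icc a b ×ˢ Icc c d) ≃ₜ closedBall (0 : EPlane) 1) := by
  obtain ⟨Θ, hΘ⟩ := exists_homeomorph_nested_rectangles (sub_one_lt a) hab (lt_add_one b)
    (sub_one_lt c) hcd (lt_add_one d)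
  exact ⟨Θ.subtype fun z => by rw [mem_closedBall_zero_iff, (hΘ z).2.1]⟩

lemma nonempty_homeomorph_annulus (ha : a < a') (hab : a' < b') (hb : b' < b)
    (hc : c < c') (hcd : c' < d') (hd : d' < d) :
    Nonempty (↥(Icc a b ×ˢ Icc c d \ Ioo a' b' ×ˢ Ioo c' d') ≃ₜ
      {x : EPlane | 1 ≤ ‖x‖ ∧ ‖x‖ ≤ 2}) := by
  obtain ⟨Θ, hΘ⟩ := exists_homeomorph_nested_rectangles ha hab hb hc hcd hd
  refine ⟨Θ.subtype fun z => ?_⟩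
  rw [mem_sdiff, ← (hΘ z).1, ← (hΘ z).2.2, not_lt, and_comm, mem_ofPred_eq]

end Models

section DigitalDiskRealization

variable {ξ : ℤ → ℝ} {δ a b c d p q : ℝ} {S T D H : Set (ℤ × ℤ)} {k : ℤ × ℤ} {z : ℝ × ℝ}

lemma ambientEquiv_shrink (hcd : c < d) (hδ : 0 < δ) (hap : a ≤ p) (hpq : p + δ ≤ q) (hqb : q ≤ b) :
    AmbientEquiv (Icc (a - δ) (b + δ) ×ˢ Icc (c - δ) (d + δ)) (Icc a b ×ˢ Icc c d)
      (Icc p q ×ˢ Icc c d) := by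
  have habove := ambientEquiv_trim_above hcd hδ (by linarith) hqb (W := ∅) (c := a)
    fun _ _ _ h => h.elim
  have hbelow := ambientEquiv_trim_below hcd hδ hap hpq (W := ∅) fun _ _ _ h => h.elim
  have h := habove.trans (hbelow.mono (prod_mono Subset.rfl (Icc_subset_Icc_right (by linarith))))
  have hswap := h.preimage (Homeomorph.prodComm ℝ ℝ)
  simp only [union_empty, Homeomorph.coe_prodComm, preimage_swap_prod] at hswap
  exact hswap

lemma cellUnion_subset_of_adj8 (hg : IsGrid ξ δ) (hST : ∀ k ∈ S, ∀ k', adj8 k k' → k' ∈ T) :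
    cellUnion ξ δ S ⊆ cellUnion ξ 0 T := by
  intro z hz
  obtain ⟨k, hk, hzk⟩ := mem_cellUnion.1 hz
  obtain ⟨l, hzl⟩ := hg.exists_mem_cell z
  exact cell_subset_cellUnion (hST k hk l (hg.adj8_of_mem_cell hzk hzl)) hzl

/-- The open cell with index `k` of the grid with lines `ξ`. -/
def openCell (ξ : ℤ → ℝ) (k : ℤ × ℤ) : Set (ℝ × ℝ) :=
  Ioo (ξ k.1) (ξ (k.1 + 1)) ×ˢ Ioo (ξ k.2) (ξ (k.2 + 1))

lemma closure_openCell (hξ : StrictMono ξ) : closure (openCell ξ k) = cell ξ 0 k := by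
  rw [openCell, closure_prod_eq, closure_Ioo (hξ (lt_add_one _)).ne,
    closure_Ioo (hξ (lt_add_one _)).ne, cell_zero]

lemma mem_of_mem_openCell (hξ : StrictMono ξ) (hz : z ∈ openCell ξ k) (hzS : z ∈ cellUnion ξ 0 S) :
    k ∈ S := by
  obtain ⟨l, hl, hzl⟩ := mem_cellUnion.1 hzS
  rw [cell_zero] at hzl
  have heq {w : ℝ} {i j : ℤ} (hi : w ∈ Ioo (ξ i) (ξ (i + 1))) (hj : w ∈ Icc (ξ j) (ξ (j + 1))) :
      i = j := by
    have h₁ := hξ.lt_iff_lt.1 (hi.1.trans_le hj.2)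
    have h₂ := hξ.lt_iff_lt.1 (hj.1.trans_lt hi.2)
    omega
  rwa [show k = l from Prod.ext (heq hz.1 hzl.1) (heq hz.2 hzl.2)]

lemma cell_zero_subset_interior (hδ : 0 < δ) : cell ξ 0 k ⊆ interior (cell ξ δ k) := by
  rw [cell_zero, cell, interior_prod_eq, interior_Icc, interior_Icc]
  exact prod_mono (Icc_subset_Ioo (by linarith) (by linarith))
    (Icc_subset_Ioo (by linarith) (by linarith))

lemma cellUnion_zero_subset_interior (hδ : 0 < δ) :
    cellUnion ξ 0 S ⊆ interior (cellUnion ξ δ S) :=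
  iUnion₂_subset fun _ hk =>
    (cell_zero_subset_interior hδ).trans (interior_mono (cell_subset_cellUnion hk))

lemma isClosed_cellUnion (hg : IsGrid ξ δ) : IsClosed (cellUnion ξ 0 S) := by
  rw [cellUnion, biUnion_eq_iUnion]
  refine LocallyFinite.isClosed_iUnion (fun z => ?_) fun k =>
    closure_openCell hg.strictMono ▸ isClosed_closure
  obtain ⟨k, hzk⟩ := hg.exists_mem_cell z
  refine ⟨cell ξ δ k, mem_interior_iff_mem_nhds.1 (cell_zero_subset_interior hg.pos hzk), ?_⟩
  have hnear : {l : ℤ × ℤ | adj8 k l}.Finite :=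
    ((finite_Icc (k.1 - 1) (k.1 + 1)).prod (finite_Icc (k.2 - 1) (k.2 + 1))).subset
      fun l ⟨h₁, h₂⟩ => by
      rw [abs_le] at h₁ h₂
      exact ⟨⟨by omega, by omega⟩, by omega, by omega⟩
  exact (hnear.preimage Subtype.val_injective.injOn).subset fun l ⟨w, hwl, hwk⟩ =>
    hg.adj8_of_mem_cell hwk hwl

lemma cellUnion_eq_sdiff_interior (hg : IsGrid ξ δ) (hdisj : Disjoint S H)
    (hH : ∀ k ∈ H, ∀ k', adj8 k k' → k' ∈ S ∪ H) :
    cellUnion ξ 0 S = cellUnion ξ 0 (S ∪ H) \ interior (cellUnion ξ 0 H) := by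
  refine Subset.antisymm (fun z hz => ⟨cellUnion_mono subset_union_left hz, fun hzH => ?_⟩) ?_
  · obtain ⟨k, hk, hzk⟩ := mem_cellUnion.1 hz
    rw [← closure_openCell hg.strictMono] at hzk
    obtain ⟨w, hwH, hwk⟩ := mem_closure_iff.1 hzk _ isOpen_interior hzH
    exact hdisj.notMem_of_mem_left hk
      (mem_of_mem_openCell hg.strictMono hwk (interior_subset hwH))
  · rintro z ⟨hz, hzH⟩
    by_contra hzS
    rw [cellUnion_union] at hz
    have hopen : IsOpen (interior (cellUnion ξ δ H) \ cellUnion ξ 0 S) :=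
      isOpen_interior.sdiff (isClosed_cellUnion hg)
    refine hzH (mem_interior.2 ⟨_, fun w hw => ?_, hopen,
      cellUnion_zero_subset_interior hg.pos (hz.resolve_left hzS), hzS⟩)
    have hwD := cellUnion_subset_of_adj8 hg hH (interior_subset hw.1)
    rw [cellUnion_union] at hwD
    exact hwD.resolve_left hw.2

lemma IsDigitalDisk.nonempty_homeomorph (hg : IsGrid ξ δ) (hD : IsDigitalDisk D) (hk : k ∈ D) :
    Nonempty (cellUnion ξ 0 D ≃ₜ closedBall (0 : EPlane) 1) := by
  obtain ⟨c, d, hR, hkR⟩ := exists_isRun hD.finite hk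
  obtain ⟨Φ⟩ := (hD.ambientEquiv_run hg hk).nonempty_homeomorph
  rw [hR.compIn_eq hkR, cellUnion_zero_column hg.strictMono.monotone hR.lt] at Φ
  obtain ⟨Ψ⟩ := nonempty_homeomorph_disk (hg.strictMono (lt_add_one k.1)) (hg.strictMono hR.lt)
  exact ⟨Φ.trans Ψ⟩

lemma exists_run_lt_run (hH : H.Finite) (hD : D.Finite)
    (hHD : ∀ k ∈ H, ∀ k', adj8 k k' → k' ∈ D) (hk : k ∈ H) :
    ∃ c d c₀ d₀, IsRun H k.1 c d ∧ IsRun D k.1 c₀ d₀ ∧ k.2 ∈ Ico c d ∧ c₀ < c ∧ d < d₀ := by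
  have hself (v : ℤ × ℤ) : adj8 v v := by simp [adj8]
  obtain ⟨c, d, hR, hkR⟩ := exists_isRun hH hk
  obtain ⟨c₀, d₀, hR₀, hkR₀⟩ := exists_isRun hD (hHD k hk k (hself k))
  have hnear (j : ℤ) (hj : j ∈ Icc (c - 1) d) : (k.1, j) ∈ D := by
    obtain ⟨l, hl, hlj⟩ : ∃ l ∈ Ico c d, |l - j| ≤ 1 :=
      ⟨max c (min j (d - 1)), by grind, by grind⟩
    exact hHD (k.1, l) (hR.subset ⟨rfl, hl⟩) _ ⟨by simp, hlj⟩
  refine ⟨c, d, c₀, d₀, hR, hR₀, hkR, ?_, ?_⟩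
  · by_contra! hc
    exact hR₀.below_notMem (hnear _ (by grind))
  · by_contra! hd
    exact hR₀.above_notMem (hnear _ (by grind))

lemma disjoint_cellUnion_sdiff_run {i c d c₀ d₀ : ℤ} (hg : IsGrid ξ δ) (hR₀ : IsRun D i c₀ d₀)
    (hc : c₀ < c) (hd : d < d₀) (hp : ξ i + δ < p) (hq : q + δ < ξ (i + 1)) :
    Disjoint (cellUnion ξ δ (D \ {i} ×ˢ Ico c₀ d₀)) (Icc p q ×ˢ Icc (ξ c) (ξ d)) := by
  refine disjoint_left.2 fun z hzD hz => ?_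
  obtain ⟨v, ⟨hvD, hvR⟩, hzv⟩ := mem_cellUnion.1 hzD
  have h₁ := hg.strictMono.lt_iff_lt.1 (by linarith [hz.1.1, hzv.1.2] : ξ i < ξ (v.1 + 1))
  have h₂ := hg.strictMono.lt_iff_lt.1 (by linarith [hz.1.2, hzv.1.1] : ξ v.1 < ξ (i + 1))
  have h₃ := hg.le_of_le_add (hz.2.1.trans hzv.2.2)
  have h₄ := hg.le_of_le_add (sub_le_iff_le_add.1 (hzv.2.1.trans hz.2.2))
  obtain rfl : v.1 = i := by omega
  exact hvR ⟨rfl, hR₀.row_mem hvD ⟨by omega, by omega⟩⟩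

/-- Shrink the hole to a rectangle strictly inside one run of the filled disk, so that collapsing
the disk onto this run does not move the hole. -/
lemma nonempty_homeomorph_of_hole (hg : IsGrid ξ δ) (hHne : H.Nonempty)
    (hH : IsDigitalDisk H) (hD : IsDigitalDisk (S ∪ H)) (hdisj : Disjoint S H)
    (hHD : ∀ k ∈ H, ∀ k', adj8 k k' → k' ∈ S ∪ H) :
    Nonempty (cellUnion ξ 0 S ≃ₜ {x : EPlane | 1 ≤ ‖x‖ ∧ ‖x‖ ≤ 2}) := by
  obtain ⟨k, hk⟩ := hHne
  set D := S ∪ H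
  obtain ⟨c, d, c₀, d₀, hR, hR₀, hkR, hc, hd⟩ := exists_run_lt_run hH.finite hD.finite hHD hk
  have hmono := hg.strictMono.monotone
  have hgap := hg.gap k.1
  have hkR₀ : k.2 ∈ Ico c₀ d₀ := ⟨hc.le.trans hkR.1, hkR.2.trans hd⟩
  obtain ⟨p, q, hp, hpq, hq⟩ : ∃ p q, ξ k.1 + δ < p ∧ p + δ < q ∧ q + δ < ξ (k.1 + 1) :=
    ⟨(2 * ξ k.1 + ξ (k.1 + 1)) / 3, (ξ k.1 + 2 * ξ (k.1 + 1)) / 3, by linarith, by linarith,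
      by linarith⟩
  have hcollapseH := hH.ambientEquiv_run hg hk
  have hcollapseD := hD.ambientEquiv_run hg (hR₀.subset ⟨rfl, hkR₀⟩ : k ∈ D)
  have hshrink := ambientEquiv_shrink (hg.strictMono hR.lt) hg.pos (a := ξ k.1) (b := ξ (k.1 + 1))
    (by linarith [hg.pos]) hpq.le (by linarith [hg.pos])
  rw [hR.compIn_eq hkR, cellUnion_zero_column hmono hR.lt] at hcollapseH
  rw [hR₀.compIn_eq hkR₀, cellUnion_zero_column hmono hR₀.lt] at hcollapseD
  have hthin := (disjoint_cellUnion_sdiff_run hg hR₀ hc hd hp hq).mono_right interior_subset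
  have hsub₁ : cellUnion ξ δ (H \ {k.1} ×ˢ Ico c d) ⊆ cellUnion ξ 0 D :=
    (cellUnion_mono sdiff_subset).trans (cellUnion_subset_of_adj8 hg hHD)
  have hsub₂ : Icc (ξ k.1 - δ) (ξ (k.1 + 1) + δ) ×ˢ Icc (ξ c - δ) (ξ d + δ) ⊆ cellUnion ξ 0 D := by
    rw [← cellUnion_column hmono hg.pos.le hR.lt]
    exact (cellUnion_mono hR.subset).trans (cellUnion_subset_of_adj8 hg hHD)
  have h := (((hcollapseH.interior.sdiff_of_subset hsub₁).mono (subset_univ _)).trans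
    ((hshrink.interior.sdiff_of_subset hsub₂).mono (subset_univ _))).trans
    ((hcollapseD.sdiff_of_disjoint hthin).mono (subset_univ _))
  rw [← cellUnion_eq_sdiff_interior hg hdisj hHD, interior_prod_eq, interior_Icc,
    interior_Icc] at h
  obtain ⟨Φ⟩ := h.nonempty_homeomorph
  obtain ⟨Ψ⟩ := nonempty_homeomorph_annulus (a := ξ k.1) (a' := p) (b' := q) (b := ξ (k.1 + 1))
    (by linarith [hg.pos]) (by linarith [hg.pos]) (by linarith [hg.pos]) (hg.strictMono hc)
    (hg.strictMono hR.lt) (hg.strictMono hd)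
  exact ⟨Φ.trans Ψ⟩

end DigitalDiskRealization

section ComponentsOfCells

variable {ξ : ℤ → ℝ} {δ : ℝ} {A B D E S : Set (ℤ × ℤ)} {s t : ℤ × ℤ} {C W X : Set (ℝ × ℝ)}
  {x : ℝ × ℝ}

lemma isPreconnected_openCell : IsPreconnected (openCell ξ s) :=
  isPreconnected_Ioo.prod isPreconnected_Ioo

lemma nonempty_openCell (hξ : StrictMono ξ) : (openCell ξ s).Nonempty :=
  (nonempty_Ioo.2 (hξ (lt_add_one _))).prod (nonempty_Ioo.2 (hξ (lt_add_one _)))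

lemma openCell_subset_cell (hξ : StrictMono ξ) : openCell ξ s ⊆ cell ξ 0 s :=
  closure_openCell hξ ▸ subset_closure

lemma openCell_subset_compl_cellUnion (hξ : StrictMono ξ) (hs : s ∉ S) :
    openCell ξ s ⊆ (cellUnion ξ 0 S)ᶜ :=
  fun _ hz hzS => hs (mem_of_mem_openCell hξ hz hzS)

lemma compl_cellUnion_subset (hg : IsGrid ξ δ) : (cellUnion ξ 0 S)ᶜ ⊆ cellUnion ξ 0 Sᶜ := by
  intro z hz
  obtain ⟨k, hk⟩ := hg.exists_mem_cell z
  exact cell_subset_cellUnion (S := Sᶜ) (fun hkS => hz (cell_subset_cellUnion hkS hk)) hk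

lemma infinite_edge_of_vadj (hξ : StrictMono ξ) (h : vadj s t) :
    {z ∈ cell ξ 0 s ∩ cell ξ 0 t | ∀ l, z ∈ cell ξ 0 l → l = s ∨ l = t}.Infinite := by
  obtain ⟨hrow, hm⟩ := h
  set m := max s.2 t.2
  refine ((Ioo_infinite (hξ (lt_add_one s.1))).image (f := fun w => (w, ξ m))
    fun _ _ _ _ h => (Prod.mk.inj h).1).mono ?_
  rintro _ ⟨w, hw, rfl⟩
  have hmem {j : ℤ} (hj : j = m ∨ j + 1 = m) : ξ m ∈ Icc (ξ j) (ξ (j + 1)) :=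
    ⟨hξ.monotone (by omega), hξ.monotone (by omega)⟩
  simp only [cell_zero]
  refine ⟨⟨⟨Ioo_subset_Icc_self hw, hmem (by omega)⟩,
    ⟨hrow ▸ Ioo_subset_Icc_self hw, hmem (by omega)⟩⟩, fun l hl => ?_⟩
  have h₁ := hξ.lt_iff_lt.1 (hw.1.trans_le hl.1.2)
  have h₂ := hξ.lt_iff_lt.1 (hl.1.1.trans_lt hw.2)
  have h₃ := hξ.le_iff_le.1 hl.2.1
  have h₄ := hξ.le_iff_le.1 hl.2.2
  simp only [Prod.ext_iff]
  omega

lemma infinite_edge (hξ : StrictMono ξ) (h : adj4 s t) :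
    {z ∈ cell ξ 0 s ∩ cell ξ 0 t | ∀ l, z ∈ cell ξ 0 l → l = s ∨ l = t}.Infinite := by
  rcases h with h | h
  · exact infinite_edge_of_vadj hξ h
  refine ((infinite_edge_of_vadj hξ h).image Prod.swap_injective.injOn).mono ?_
  rintro _ ⟨z, ⟨⟨hs, ht⟩, hl⟩, rfl⟩
  exact ⟨⟨hs.symm, ht.symm⟩, fun l hzl =>
    (hl l.swap hzl.symm).imp (congrArg Prod.swap) (congrArg Prod.swap)⟩

lemma subset_cellUnion_of_isPreconnected (hg : IsGrid ξ δ) (hW : IsPreconnected W)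
    (hWE : W ⊆ cellUnion ξ 0 E) (hWS : (W ∩ cellUnion ξ 0 S).Nonempty)
    (hS : ∀ s ∈ S, ∀ t ∈ E, adj8 s t → t ∈ S) : W ⊆ cellUnion ξ 0 S := by
  have hcover : W ⊆ cellUnion ξ 0 S ∪ cellUnion ξ 0 (E \ S) := by
    rw [← cellUnion_union, union_sdiff_self]
    exact hWE.trans (cellUnion_mono subset_union_right)
  by_contra hnot
  obtain ⟨z, hzW, hzS⟩ := not_subset.1 hnot
  obtain ⟨w, -, hwS, hwE⟩ := isPreconnected_closed_iff.1 hW _ _ (isClosed_cellUnion hg)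
    (isClosed_cellUnion hg) hcover hWS ⟨z, hzW, (hcover hzW).resolve_left hzS⟩
  obtain ⟨s, hs, hws⟩ := mem_cellUnion.1 hwS
  obtain ⟨t, ht, hwt⟩ := mem_cellUnion.1 hwE
  refine ht.2 (hS s hs t ht.1 (hg.adj8_of_mem_cell ?_ hwt))
  exact interior_subset (cell_zero_subset_interior hg.pos hws)

lemma connIn_adj8_of_isPreconnected (hg : IsGrid ξ δ) (hW : IsPreconnected W)
    (hWE : W ⊆ cellUnion ξ 0 E) (hs : openCell ξ s ⊆ W) (ht : openCell ξ t ⊆ W) :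
    ConnIn adj8 E s t := by
  obtain ⟨z, hz⟩ := nonempty_openCell hg.strictMono (s := s)
  obtain ⟨w, hw⟩ := nonempty_openCell hg.strictMono (s := t)
  have hsE := mem_of_mem_openCell hg.strictMono hz (hWE (hs hz))
  refine mem_of_mem_openCell hg.strictMono hw
    (subset_cellUnion_of_isPreconnected (S := compIn adj8 E s) hg hW hWE
      ⟨z, hs hz,
        cell_subset_cellUnion (mem_compIn_self hsE) (openCell_subset_cell hg.strictMono hz)⟩
      (fun _ ha _ hb hab => mem_compIn_of_rel ha hb hab) (ht hw))

/-- Neighbouring open cells are joined through an inner point of their common edge. -/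
lemma openCell_subset_of_adj4 (hξ : StrictMono ξ) (hs : s ∈ A \ B) (ht : t ∈ A \ B) (h : adj4 s t)
    (hsC : openCell ξ s ⊆ connectedComponentIn (cellUnion ξ 0 A ∩ (cellUnion ξ 0 B)ᶜ) x) :
    openCell ξ t ⊆ connectedComponentIn (cellUnion ξ 0 A ∩ (cellUnion ξ 0 B)ᶜ) x := by
  obtain ⟨m, ⟨hms, hmt⟩, hm⟩ := (infinite_edge hξ h).nonempty
  obtain ⟨z, hz⟩ := nonempty_openCell hξ (s := s)
  have hopen {k : ℤ × ℤ} (hk : k ∈ A \ B) :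
      openCell ξ k ⊆ cellUnion ξ 0 A ∩ (cellUnion ξ 0 B)ᶜ := subset_inter
    ((openCell_subset_cell hξ).trans (cell_subset_cellUnion hk.1))
    (openCell_subset_compl_cellUnion hξ hk.2)
  have hmAB : m ∈ cellUnion ξ 0 A ∩ (cellUnion ξ 0 B)ᶜ := by
    refine ⟨cell_subset_cellUnion hs.1 hms, fun hmB => ?_⟩
    obtain ⟨l, hl, hml⟩ := mem_cellUnion.1 hmB
    rcases hm l hml with rfl | rfl
    exacts [hs.2 hl, ht.2 hl]
  have hinsert {k : ℤ × ℤ} (hmk : m ∈ cell ξ 0 k) : IsPreconnected (insert m (openCell ξ k)) :=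
    isPreconnected_openCell.subset_closure (subset_insert _ _)
      (insert_subset (by rwa [closure_openCell hξ]) subset_closure)
  have hunion := (hinsert hms).union m (mem_insert _ _) (mem_insert _ _) (hinsert hmt)
  rw [connectedComponentIn_eq (hsC hz)]
  exact ((subset_insert _ _).trans subset_union_right).trans
    (hunion.subset_connectedComponentIn (Or.inl (mem_insert_of_mem _ hz))
      (union_subset (insert_subset hmAB (hopen hs)) (insert_subset hmAB (hopen ht))))

lemma closure_connectedComponentIn_eq_cellUnion (hg : IsGrid ξ δ) (hwc : WellComposed (A \ B))
    (hx : x ∈ cellUnion ξ 0 A ∩ (cellUnion ξ 0 B)ᶜ) :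
    ∃ k ∈ A \ B, closure (connectedComponentIn (cellUnion ξ 0 A ∩ (cellUnion ξ 0 B)ᶜ) x) =
      cellUnion ξ 0 (compIn adj4 (A \ B) k) := by
  have hξ := hg.strictMono
  set Y := cellUnion ξ 0 A ∩ (cellUnion ξ 0 B)ᶜ
  have hY : Y ⊆ cellUnion ξ 0 (A \ B) := fun z hz => by
    obtain ⟨k, hkA, hzk⟩ := mem_cellUnion.1 hz.1
    have hkB : k ∉ B := fun hkB => hz.2 (cell_subset_cellUnion hkB hzk)
    exact cell_subset_cellUnion (S := A \ B) ⟨hkA, hkB⟩ hzk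
  obtain ⟨k, hk, hxk⟩ := mem_cellUnion.1 (hY hx)
  refine ⟨k, hk, Subset.antisymm (closure_minimal ?_ (isClosed_cellUnion hg)) ?_⟩
  · exact subset_cellUnion_of_isPreconnected hg isPreconnected_connectedComponentIn
      ((connectedComponentIn_subset _ _).trans hY)
      ⟨x, mem_connectedComponentIn hx, cell_subset_cellUnion (mem_compIn_self hk) hxk⟩
      fun s hs t ht hst => hs.trans (hwc.connIn_of_adj8 hs.right_mem ht hst)
  have hbase : openCell ξ k ⊆ connectedComponentIn Y x := by
    refine (subset_insert x _).trans (IsPreconnected.subset_connectedComponentIn ?_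
      (mem_insert _ _) (insert_subset hx (subset_inter ?_ ?_)))
    · exact isPreconnected_openCell.subset_closure (subset_insert _ _)
        (insert_subset (by rwa [closure_openCell hξ]) subset_closure)
    · exact (openCell_subset_cell hξ).trans (cell_subset_cellUnion hk.1)
    · exact openCell_subset_compl_cellUnion hξ hk.2
  refine iUnion₂_subset fun s hs => ?_
  rw [← closure_openCell hξ]
  exact closure_mono (ConnIn.induction hs hbase fun a ha b hb hab hsa =>
    openCell_subset_of_adj4 hξ ha hb hab hsa)

end ComponentsOfCells

section RegularComponents

/-- The components of `X` whose closure meets the closure of `C` in infinitely many points. -/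
def touchingComponents {α : Type*} [TopologicalSpace α] (X C : Set α) : Set (Set α) :=
  {T | (∃ x ∈ X, T = connectedComponentIn X x) ∧ (closure T ∩ closure C).Infinite}

lemma touchingComponents_image_subsingleton {α β : Type*} [TopologicalSpace α]
    [TopologicalSpace β] (τ : α ≃ₜ β) {X C : Set α} (h : (touchingComponents X C).Subsingleton) :
    (touchingComponents (τ '' X) (τ '' C)).Subsingleton := by
  refine (h.image (image τ)).anti ?_
  rintro _ ⟨⟨_, ⟨x, hx, rfl⟩, rfl⟩, hinf⟩
  rw [← τ.image_connectedComponentIn hx] at hinf ⊢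
  rw [← τ.image_closure, ← τ.image_closure, ← image_inter τ.injective] at hinf
  exact mem_image_of_mem _ ⟨⟨x, hx, rfl⟩, hinf.of_image _⟩

/-- The boundary lines of `A` and of `B` lie on different grid lines: between two consecutive
columns, and between two consecutive rows, at most one of the two sets changes. -/
structure Transverse (A B : Set (ℤ × ℤ)) : Prop where
  col : ∀ x x', |x - x'| ≤ 1 →
    (∀ y, (x, y) ∈ A ↔ (x', y) ∈ A) ∨ ∀ y, (x, y) ∈ B ↔ (x', y) ∈ B
  row : ∀ y y', |y - y'| ≤ 1 →
    (∀ x, (x, y) ∈ A ↔ (x, y') ∈ A) ∨ ∀ x, (x, y) ∈ B ↔ (x, y') ∈ B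

variable {A B E S : Set (ℤ × ℤ)} {k s s' t t' : ℤ × ℤ}

lemma Transverse.wellComposed_sdiff (h : Transverse A B) (hA : WellComposed A)
    (hB : WellComposed B) : WellComposed (A \ B) := by
  intro u hu v hv huv
  rcases h.col _ _ huv.1 with hcol | hcol
  · have h₁ : (v.1, u.2) ∈ A := (hcol u.2).1 hu.1
    have h₂ : (u.1, v.2) ∈ A := (hcol v.2).2 hv.1
    by_contra! hnot
    have h₁B : (v.1, u.2) ∈ B := by_contra fun hn => hnot.1 ⟨h₁, hn⟩
    have h₂B : (u.1, v.2) ∈ B := by_contra fun hn => hnot.2 ⟨h₂, hn⟩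
    have hdiag : adj8 (v.1, u.2) (u.1, v.2) := ⟨abs_sub_comm u.1 v.1 ▸ huv.1, huv.2⟩
    exact (hB _ h₁B _ h₂B hdiag).elim hu.2 hv.2
  · exact (hA u hu.1 v hv.1 huv).imp (fun hp => ⟨hp, fun hn => hu.2 ((hcol u.2).2 hn)⟩)
      fun hq => ⟨hq, fun hn => hv.2 ((hcol v.2).1 hn)⟩

lemma Transverse.iff_or_iff (h : Transverse A B) (hst : adj4 s t) :
    (s ∈ A ↔ t ∈ A) ∨ (s ∈ B ↔ t ∈ B) := by
  obtain ⟨x, y⟩ := s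
  obtain ⟨x', y'⟩ := t
  rcases hst with ⟨h₁, h₂⟩ | ⟨h₁, h₂⟩
  · obtain rfl : x = x' := h₁
    exact (h.row y y' (by grind)).imp (· x) (· x)
  · obtain rfl : y = y' := h₁
    exact (h.col x x' (by grind)).imp (· y) (· y)

lemma Transverse.mem_iff_mem (h : Transverse A B) (ht : t ∉ compIn adj4 (A \ B) k)
    (hs : s ∈ compIn adj4 (A \ B) k) (hts : adj4 t s) : t ∈ A ↔ t ∈ B := by
  have htAB : t ∉ A \ B := fun htAB =>
    ht (mem_compIn_of_rel hs htAB (Std.Symm.symm _ _ hts))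
  have hsAB : s ∈ A \ B := hs.right_mem
  have := h.iff_or_iff hts
  grind

variable {ξ : ℤ → ℝ} {δ : ℝ} {C X : Set (ℝ × ℝ)}

lemma connectedComponentIn_mem_touchingComponents (hξ : StrictMono ξ)
    (hC : closure C = cellUnion ξ 0 S) (ht : openCell ξ t ⊆ X) (hs : s ∈ S) (hts : adj4 t s)
    {z : ℝ × ℝ} (hz : z ∈ openCell ξ t) : connectedComponentIn X z ∈ touchingComponents X C := by
  refine ⟨⟨z, ht hz, rfl⟩, (infinite_edge hξ hts).mono ?_⟩
  rintro m ⟨⟨hmt, hms⟩, -⟩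
  rw [← closure_openCell hξ] at hmt
  refine ⟨closure_mono (isPreconnected_openCell.subset_connectedComponentIn hz ht) hmt, ?_⟩
  exact hC ▸ cell_subset_cellUnion hs hms

lemma connIn_of_touchingComponents_subsingleton (hg : IsGrid ξ δ) (hwc : WellComposed Sᶜ)
    (hES : E ⊆ Sᶜ) (hXE : X ⊆ cellUnion ξ 0 E) (hC : closure C = cellUnion ξ 0 S)
    (huniq : (touchingComponents X C).Subsingleton) (ht : openCell ξ t ⊆ X)
    (ht' : openCell ξ t' ⊆ X) (hs : s ∈ S) (hs' : s' ∈ S) (hts : adj4 t s) (hts' : adj4 t' s') :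
    ConnIn adj4 Sᶜ t t' := by
  have hξ := hg.strictMono
  obtain ⟨z, hz⟩ := nonempty_openCell hξ (s := t)
  obtain ⟨z', hz'⟩ := nonempty_openCell hξ (s := t')
  have heq : connectedComponentIn X z = connectedComponentIn X z' :=
    huniq (connectedComponentIn_mem_touchingComponents hξ hC ht hs hts hz)
      (connectedComponentIn_mem_touchingComponents hξ hC ht' hs' hts' hz')
  have hconn : ConnIn adj8 E t t' := connIn_adj8_of_isPreconnected hg
    (isPreconnected_connectedComponentIn (F := X) (x := z))
    ((connectedComponentIn_subset _ _).trans hXE)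
    (isPreconnected_openCell.subset_connectedComponentIn hz ht)
    (heq ▸ isPreconnected_openCell.subset_connectedComponentIn hz' ht')
  exact hconn.induction (.refl (hES hconn.1)) fun a ha b hb hab hta =>
    hta.trans (hwc.connIn_of_adj8 (hES ha) (hES hb) hab)

lemma connIn_compl_compIn_of_mem_iff (hg : IsGrid ξ δ) (hA : WellComposed A) (hB : WellComposed B)
    (hAB : Transverse A B) (hC : closure C = cellUnion ξ 0 (compIn adj4 (A \ B) k))
    (hTP : (touchingComponents (cellUnion ξ 0 A ∩ cellUnion ξ 0 B) C).Subsingleton)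
    (hTN : (touchingComponents ((cellUnion ξ 0 A)ᶜ ∩ (cellUnion ξ 0 B)ᶜ) C).Subsingleton)
    (ht : t ∉ compIn adj4 (A \ B) k) (ht' : t' ∉ compIn adj4 (A \ B) k)
    (hs : s ∈ compIn adj4 (A \ B) k) (hs' : s' ∈ compIn adj4 (A \ B) k) (hts : adj4 t s)
    (hts' : adj4 t' s') (htt' : t ∈ A ↔ t' ∈ A) : ConnIn adj4 (compIn adj4 (A \ B) k)ᶜ t t' := by
  have hξ := hg.strictMono
  have hwc : WellComposed (compIn adj4 (A \ B) k)ᶜ :=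
    ((hAB.wellComposed_sdiff hA hB).compIn k).compl
  have hBS : B ⊆ (compIn adj4 (A \ B) k)ᶜ := fun l hl hlS => (compIn_subset hlS).2 hl
  have hAS : Aᶜ ⊆ (compIn adj4 (A \ B) k)ᶜ := fun l hl hlS => hl (compIn_subset hlS).1
  have hcell {D : Set (ℤ × ℤ)} {l : ℤ × ℤ} (hl : l ∈ D) : openCell ξ l ⊆ cellUnion ξ 0 D :=
    (openCell_subset_cell hξ).trans (cell_subset_cellUnion hl)
  have hAt := hAB.mem_iff_mem ht hs hts
  have hAt' := hAB.mem_iff_mem ht' hs' hts'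
  by_cases h : t ∈ A
  · exact connIn_of_touchingComponents_subsingleton hg hwc hBS inter_subset_right hC hTP
      (subset_inter (hcell h) (hcell (hAt.1 h)))
      (subset_inter (hcell (htt'.1 h)) (hcell (hAt'.1 (htt'.1 h)))) hs hs' hts hts'
  · have h' : t' ∉ A := fun h' => h (htt'.2 h')
    exact connIn_of_touchingComponents_subsingleton hg hwc hAS
      (inter_subset_left.trans (compl_cellUnion_subset hg)) hC hTN
      (subset_inter (openCell_subset_compl_cellUnion hξ h)
        (openCell_subset_compl_cellUnion hξ fun hn => h (hAt.2 hn)))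
      (subset_inter (openCell_subset_compl_cellUnion hξ h')
        (openCell_subset_compl_cellUnion hξ fun hn => h' (hAt'.2 hn))) hs hs' hts hts'

/-- Every complementary component of `S` borders `S` along a cell of `A ∩ B` or of `(A ∪ B)ᶜ`,
and each of the two kinds occurs in a single complementary component. -/
lemma connIn_compl_compIn_or_or (hg : IsGrid ξ δ) (hA : WellComposed A) (hB : WellComposed B)
    (hAB : Transverse A B) (hk : k ∈ A \ B)
    (hC : closure C = cellUnion ξ 0 (compIn adj4 (A \ B) k))
    (hTP : (touchingComponents (cellUnion ξ 0 A ∩ cellUnion ξ 0 B) C).Subsingleton)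
    (hTN : (touchingComponents ((cellUnion ξ 0 A)ᶜ ∩ (cellUnion ξ 0 B)ᶜ) C).Subsingleton) :
    let S := compIn adj4 (A \ B) k
    ∀ a ∉ S, ∀ b ∉ S, ∀ c ∉ S, ConnIn adj4 Sᶜ a b ∨ ConnIn adj4 Sᶜ a c ∨ ConnIn adj4 Sᶜ b c := by
  intro S a ha b hb c hc
  have hborder {l : ℤ × ℤ} (hl : l ∉ S) : ∃ t ∈ compIn adj4 Sᶜ l, ∃ s ∈ S, adj4 t s :=
    exists_rel_of_notMem isConn_adj4_univ (mem_compIn_self hk) hl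
  obtain ⟨a', haa', s₁, hs₁, h₁⟩ := hborder ha
  obtain ⟨b', hbb', s₂, hs₂, h₂⟩ := hborder hb
  obtain ⟨c', hcc', s₃, hs₃, h₃⟩ := hborder hc
  have hpigeonhole : (a' ∈ A ↔ b' ∈ A) ∨ (a' ∈ A ↔ c' ∈ A) ∨ (b' ∈ A ↔ c' ∈ A) := by tauto
  refine hpigeonhole.imp (fun h => ?_) (Or.imp (fun h => ?_) fun h => ?_)
  · exact haa'.trans ((connIn_compl_compIn_of_mem_iff hg hA hB hAB hC hTP hTN
      haa'.right_mem hbb'.right_mem hs₁ hs₂ h₁ h₂ h).trans hbb'.symm)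
  · exact haa'.trans ((connIn_compl_compIn_of_mem_iff hg hA hB hAB hC hTP hTN
      haa'.right_mem hcc'.right_mem hs₁ hs₃ h₁ h₃ h).trans hcc'.symm)
  · exact hbb'.trans ((connIn_compl_compIn_of_mem_iff hg hA hB hAB hC hTP hTN
      hbb'.right_mem hcc'.right_mem hs₂ hs₃ h₂ h₃ h).trans hcc'.symm)

theorem nonempty_homeomorph_closure_component (hg : IsGrid ξ δ) (hfin : A.Finite)
    (hA : WellComposed A) (hB : WellComposed B) (hAB : Transverse A B) {x : ℝ × ℝ}
    (hx : x ∈ cellUnion ξ 0 A ∩ (cellUnion ξ 0 B)ᶜ)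
    (hC : C = connectedComponentIn (cellUnion ξ 0 A ∩ (cellUnion ξ 0 B)ᶜ) x)
    (hTP : (touchingComponents (cellUnion ξ 0 A ∩ cellUnion ξ 0 B) C).Subsingleton)
    (hTN : (touchingComponents ((cellUnion ξ 0 A)ᶜ ∩ (cellUnion ξ 0 B)ᶜ) C).Subsingleton) :
    Nonempty (closure C ≃ₜ closedBall (0 : EPlane) 1) ∨
      Nonempty (closure C ≃ₜ {x : EPlane | 1 ≤ ‖x‖ ∧ ‖x‖ ≤ 2}) := by
  have hwc := hAB.wellComposed_sdiff hA hB
  obtain ⟨k, hk, hclosure⟩ := closure_connectedComponentIn_eq_cellUnion hg hwc hx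
  rw [← hC] at hclosure
  have htwo := connIn_compl_compIn_or_or hg hA hB hAB hk hclosure hTP hTN
  rw [hclosure]
  rcases isDigitalDisk_or_exists_hole (hfin.subset (compIn_subset.trans sdiff_subset))
    ⟨k, mem_compIn_self hk⟩ isConn_compIn (hwc.compIn k) htwo with
    hD | ⟨H, hHne, hH, hSH, hdisj, hHS⟩
  · exact Or.inl (hD.nonempty_homeomorph hg (mem_compIn_self hk))
  · exact Or.inr (nonempty_homeomorph_of_hole hg hHne hH hSH hdisj hHS)

end RegularComponents

section PixelGrid

/-- The lines at distance `ε` and `2 * ε` from the integers, in increasing order: the indices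
`4 * n`, `4 * n + 1`, `4 * n + 2`, `4 * n + 3` stand for `n - 2 * ε`, `n - ε`, `n + ε`,
`n + 2 * ε`. -/
def gridLine (ε : ℝ) (i : ℤ) : ℝ := (i / 4 : ℤ) + (i % 4 + i % 4 / 2 - 2 : ℤ) * ε

/-- The grid cells that the pixels of `P` occupy after being enlarged: the pixel `(i, j)` fills the
columns from `4 * i - a` to `4 * i + b - 1`, and the rows likewise. In terms of `gridLine ε`, the
enlargement by `ε` is `a = 3`, `b = 2`, and the one by `2 * ε` is `a = 4`, `b = 3`. -/
def pixelCells (P : Set (ℕ × ℕ)) (a b : ℤ) : Set (ℤ × ℤ) :=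
  ⋃ p ∈ P, Ico (4 * (p.1 : ℤ) - a) (4 * p.1 + b) ×ˢ Ico (4 * (p.2 : ℤ) - a) (4 * p.2 + b)

variable {ε : ℝ} {P G : Set (ℕ × ℕ)} {a b : ℤ}

lemma gridLine_four_mul_add (n : ℤ) {r : ℤ} (hr : 0 ≤ r) (hr' : r < 4) :
    gridLine ε (4 * n + r) = n + (r + r / 2 - 2 : ℤ) * ε := by
  rw [gridLine, show (4 * n + r) / 4 = n by omega, show (4 * n + r) % 4 = r by omega]

lemma gridLine_four_mul_sub (n : ℤ) {r : ℤ} (hr : 0 < r) (hr' : r ≤ 4) :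
    gridLine ε (4 * n - r) = n - 1 + (2 - r + (4 - r) / 2 : ℤ) * ε := by
  rw [show 4 * n - r = 4 * (n - 1) + (4 - r) by ring,
    gridLine_four_mul_add _ (by omega) (by omega)]
  push_cast
  ring

lemma isGrid_gridLine (hε₀ : 0 < ε) (hε : ε < 1 / 4) :
    IsGrid (gridLine ε) (min ε (1 - 4 * ε) / 4) := by
  have hpos : 0 < min ε (1 - 4 * ε) := lt_min hε₀ (by linarith)
  have hle : min ε (1 - 4 * ε) ≤ ε := min_le_left _ _
  have hle' : min ε (1 - 4 * ε) ≤ 1 - 4 * ε := min_le_right _ _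
  refine ⟨by linarith, fun i => ?_⟩
  have hmod : i % 4 = 0 ∨ i % 4 = 1 ∨ i % 4 = 2 ∨ i % 4 = 3 := by omega
  rcases hmod with h | h | h | h
  · rw [gridLine, gridLine, h, show (i + 1) / 4 = i / 4 by omega, show (i + 1) % 4 = 1 by omega]
    norm_num; linarith
  · rw [gridLine, gridLine, h, show (i + 1) / 4 = i / 4 by omega, show (i + 1) % 4 = 2 by omega]
    norm_num; linarith
  · rw [gridLine, gridLine, h, show (i + 1) / 4 = i / 4 by omega, show (i + 1) % 4 = 3 by omega]
    norm_num; linarith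
  · rw [gridLine, gridLine, h, show (i + 1) / 4 = i / 4 + 1 by omega,
      show (i + 1) % 4 = 0 by omega]
    norm_num; linarith

lemma mem_pixelCells {k : ℤ × ℤ} : k ∈ pixelCells P a b ↔ ∃ p ∈ P,
    (4 * (p.1 : ℤ) - a ≤ k.1 ∧ k.1 < 4 * p.1 + b) ∧
      4 * (p.2 : ℤ) - a ≤ k.2 ∧ k.2 < 4 * p.2 + b := by
  simp only [pixelCells, mem_iUnion, exists_prop, mem_prod, mem_Ico]

lemma finite_pixelCells (hP : P.Finite) : (pixelCells P a b).Finite :=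
  hP.biUnion fun _ _ => (finite_Ico _ _).prod (finite_Ico _ _)

lemma wellComposed_pixelCells (hab : (a + b) % 4 ≠ 0) : WellComposed (pixelCells P a b) := by
  intro u hu v hv ⟨h₁, h₂⟩
  obtain ⟨p, hp, hup⟩ := mem_pixelCells.1 hu
  obtain ⟨q, hq, hvq⟩ := mem_pixelCells.1 hv
  rw [abs_le] at h₁ h₂
  simp only [mem_pixelCells]
  by_cases h : 4 * (p.1 : ℤ) - a ≤ v.1 ∧ v.1 < 4 * p.1 + b
  · exact Or.inl ⟨p, hp, h, hup.2⟩
  · exact Or.inr ⟨q, hq, by omega, hvq.2⟩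

lemma transverse_pixelCells : Transverse (pixelCells P 3 2) (pixelCells G 4 3) where
  col x x' h := by
    rw [abs_le] at h
    have hmod : (max x x' % 4 = 0 ∨ max x x' % 4 = 3) ∨ max x x' % 4 = 1 ∨ max x x' % 4 = 2 := by
      omega
    simp only [mem_pixelCells]
    refine hmod.imp (fun hm y => ?_) fun hm y => ?_ <;>
      refine exists_congr fun p => and_congr_right fun _ => and_congr_left fun _ => by omega
  row y y' h := by
    rw [abs_le] at h
    have hmod : (max y y' % 4 = 0 ∨ max y y' % 4 = 3) ∨ max y y' % 4 = 1 ∨ max y y' % 4 = 2 := by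
      omega
    simp only [mem_pixelCells]
    refine hmod.imp (fun hm x => ?_) fun hm x => ?_ <;>
      refine exists_congr fun p => and_congr_right fun _ => and_congr_right fun _ => by omega

lemma exists_mem_Icc_abs_sub_le {l u e y : ℝ} (hlu : l ≤ u) (he : 0 ≤ e) :
    (∃ x ∈ Icc l u, |x - y| ≤ e) ↔ y ∈ Icc (l - e) (u + e) := by
  refine ⟨fun ⟨x, hx, hxy⟩ => ?_, fun hy => ⟨max l (min u y), ?_, ?_⟩⟩
  · rw [abs_le] at hxy
    exact ⟨by linarith [hx.1], by linarith [hx.2]⟩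
  · exact ⟨le_max_left _ _, max_le hlu (min_le_left _ _)⟩
  · grind

lemma mem_thick_fg {e : ℝ} (he : 0 ≤ e) {y : Plane} : y ∈ thick e (fg P) ↔
    ∃ p ∈ P, y 0 ∈ Icc ((p.1 : ℝ) - 1 - e) (p.1 + e) ∧ y 1 ∈ Icc ((p.2 : ℝ) - 1 - e) (p.2 + e) := by
  simp only [← exists_mem_Icc_abs_sub_le (sub_le_self _ zero_le_one) he]
  constructor
  · rintro ⟨x, hx, hxy⟩
    obtain ⟨p, hp, h₀, h₁⟩ := mem_iUnion₂.1 hx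
    exact ⟨p, hp, ⟨x 0, h₀, (norm_le_pi_norm (x - y) 0).trans hxy⟩,
      x 1, h₁, (norm_le_pi_norm (x - y) 1).trans hxy⟩
  · rintro ⟨p, hp, ⟨u, hu, hu'⟩, v, hv, hv'⟩
    refine ⟨![u, v], mem_iUnion₂.2 ⟨p, hp, hu, hv⟩, ?_⟩
    exact (pi_norm_le_iff_of_nonneg he).2 (Fin.forall_fin_two.2 ⟨hu', hv'⟩)

lemma thick_fg_eq_preimage {ξ : ℤ → ℝ} {e : ℝ} (hξ : Monotone ξ) (he : 0 ≤ e) (hab : 0 < a + b)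
    (hleft : ∀ n : ℤ, ξ (4 * n - a) = n - 1 - e) (hright : ∀ n : ℤ, ξ (4 * n + b) = n + e) :
    thick e (fg P) = Homeomorph.finTwoArrow ⁻¹' cellUnion ξ 0 (pixelCells P a b) := by
  have hcells : cellUnion ξ 0 (pixelCells P a b) =
      ⋃ p ∈ P, Icc ((p.1 : ℝ) - 1 - e) (p.1 + e) ×ˢ Icc ((p.2 : ℝ) - 1 - e) (p.2 + e) := by
    rw [cellUnion, pixelCells]
    simp only [biUnion_iUnion]
    refine iUnion₂_congr fun p _ => ?_
    simpa only [sub_zero, add_zero, hleft, hright, Int.cast_natCast, cellUnion] using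
      cellUnion_rectangle hξ (le_refl 0) (by omega : 4 * (p.1 : ℤ) - a < 4 * p.1 + b)
        (by omega : 4 * (p.2 : ℤ) - a < 4 * p.2 + b)
  ext y
  rw [mem_thick_fg he, hcells, mem_preimage, mem_iUnion₂]
  simp only [exists_prop, mem_prod, Homeomorph.finTwoArrow_apply]

end PixelGrid

theorem regular_component_closure_disk_or_annulus_general {P G : Set (ℕ × ℕ)} (hP : P.Finite)
    {ε : ℝ} (hε₀ : 0 < ε) (hε : ε < 1 / 4) {C : Set Plane} (hC : IsCompOf C (FPset P G ε))
    (hTP : {T | IsCompOf T (TPset P G ε) ∧ SharesEdge T C}.Subsingleton)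
    (hTN : {T | IsCompOf T (TNset P G ε) ∧ SharesEdge T C}.Subsingleton) :
    Nonempty (closure C ≃ₜ closedBall (0 : EPlane) 1) ∨
      Nonempty (closure C ≃ₜ {x : EPlane | 1 ≤ ‖x‖ ∧ ‖x‖ ≤ 2}) := by
  obtain ⟨x, hx, hCx⟩ := hC
  let τ : Plane ≃ₜ ℝ × ℝ := Homeomorph.finTwoArrow
  have hτC : τ '' C = connectedComponentIn (τ '' FPset P G ε) (τ x) := by
    rw [hCx, τ.image_connectedComponentIn hx]
  have hg := isGrid_gridLine hε₀ hε
  have hA : thick ε (fg P) = τ ⁻¹' cellUnion (gridLine ε) 0 (pixelCells P 3 2) :=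
    thick_fg_eq_preimage hg.strictMono.monotone hε₀.le (by norm_num)
      (fun n => by rw [gridLine_four_mul_sub] <;> norm_num; ring)
      (fun n => by rw [gridLine_four_mul_add] <;> norm_num)
  have hB : thick (2 * ε) (fg G) = τ ⁻¹' cellUnion (gridLine ε) 0 (pixelCells G 4 3) :=
    thick_fg_eq_preimage hg.strictMono.monotone (by linarith) (by norm_num)
      (fun n => by rw [gridLine_four_mul_sub] <;> norm_num; ring)
      (fun n => by rw [gridLine_four_mul_add] <;> norm_num)
  have himage (X : Set (ℝ × ℝ)) : τ '' (τ ⁻¹' X) = X := image_preimage_eq _ τ.surjective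
  have hTP' := touchingComponents_image_subsingleton τ hTP
  have hTN' := touchingComponents_image_subsingleton τ hTN
  rw [TPset, hA, hB, ← preimage_inter, himage] at hTP'
  rw [TNset, hA, hB, ← preimage_compl, ← preimage_compl, ← preimage_inter, himage] at hTN'
  have hτx := mem_image_of_mem τ hx
  rw [FPset, hA, hB, ← preimage_compl, ← preimage_inter, himage] at hτx hτC
  have hclosure := τ.image (closure C)
  rw [τ.image_closure] at hclosure
  exact (nonempty_homeomorph_closure_component hg (finite_pixelCells hP)
    (wellComposed_pixelCells (by norm_num)) (wellComposed_pixelCells (by norm_num))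
    transverse_pixelCells hτx hτC hTP' hTN').imp
    (Nonempty.map hclosure.trans) (Nonempty.map hclosure.trans)

/-- The closure of a regular connected component of `FP` is homeomorphic
either to the closed Euclidean unit disk or to the closed annulus `{1 ≤ ‖x‖₂ ≤ 2}`. -/
theorem regular_component_closure_disk_or_annulus
    (h w : ℕ) (P G : Set (ℕ × ℕ)) (hP : OnGrid P h w) (hG : OnGrid G h w)
    (ε : ℝ) (hε0 : 0 < ε) (hε : ε < 1 / 4)
    (C : Set Plane) (hC : IsCompOf C (FPset P G ε)) (hreg : RegularComp P G ε C) :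
    Nonempty (↥(closure C) ≃ₜ ↥(Metric.closedBall (0 : EPlane) 1)) ∨
    Nonempty (↥(closure C) ≃ₜ ↥{x : EPlane | 1 ≤ ‖x‖ ∧ ‖x‖ ≤ 2}) := by
  have hfin : P.Finite := ((finite_Icc 1 h).prod (finite_Icc 1 w)).subset hP
  exact regular_component_closure_disk_or_annulus_general hfin hε0 hε hC
    (fun _ h₁ _ h₂ => hreg.1.unique h₁ h₂) fun _ h₁ _ h₂ => hreg.2.unique h₁ h₂

end
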